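/- arXiv:1412.1499 — 4 statements merged into one kernel-verified Lean document; each statement's English description precedes it below -/
import Mathlib

section
/- Let ψ(x) = −x + Σ_{k=1}^∞ [ (−1)^{k+1}(6k+1) x^{(6k+1)²} + (−1)^{k}(6k−1) x^{(6k−1)²} ]. Then for every complex number x with |x| < 1, one has ψ(x) = − x · ∏_{n=1}^∞ (1 − x^{8n})³ − 3 x⁹ · ∏_{n=1}^∞ (1 − x^{72n})³. (Equivalently, writing q = x^{24}, ψ(q) = −(η(q^{1/3})³ + 3 η(q³)³).) -/
open scoped BigOperators

/-- The coefficient `ψ(x) = −x + Σ_{k=1}^∞ [(−1)^{k+1}(6k+1) x^{(6k+1)²}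
+ (−1)^{k}(6k−1) x^{(6k−1)²}]` of (minus) `xyz` in the open Gromov–Witten
potential of `ℙ¹_{3,3,3}` (summation reindexed by `k = j + 1`). -/
noncomputable def psi333 (x : ℂ) : ℂ :=
  -x + ∑' j : ℕ,
    ((-1 : ℂ) ^ (j + 2) * (6 * (j : ℂ) + 7) * x ^ ((6 * j + 7) ^ 2)
      + (-1 : ℂ) ^ (j + 1) * (6 * (j : ℂ) + 5) * x ^ ((6 * j + 5) ^ 2))

open Finset Filter Topology

/-- The finite product `(q;q)_k`. -/
noncomputable def qP (q : ℂ) (k : ℕ) : ℂ := ∏ i ∈ range k, (1 - q ^ (i + 1))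

/-- Triangular numbers. -/
def triT (m : ℕ) : ℕ := ∑ i ∈ range (m + 1), i

/-- The terms of the finite form of Jacobi's identity. -/
noncomputable def jacE (q : ℂ) (n m : ℕ) : ℂ :=
  if m ≤ n then (-1) ^ m * q ^ triT m * (qP q (n - m))⁻¹ * (qP q (n + m + 1))⁻¹ else 0

lemma triT_succ (m : ℕ) : triT (m + 1) = triT m + (m + 1) := by
  unfold triT
  rw [sum_range_succ]

lemma triT_zero : triT 0 = 0 := by simp [triT]

lemma le_triT (m : ℕ) : m ≤ triT m := by
  cases m with
  | zero => simp
  | succ k => rw [triT_succ]; omega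

lemma triT_sq (m : ℕ) : 8 * triT m + 1 = (2 * m + 1) ^ 2 := by
  induction m with
  | zero => simp [triT_zero]
  | succ k ih => rw [triT_succ]; linarith [ih]

lemma qP_zero (q : ℂ) : qP q 0 = 1 := by simp [qP]

lemma qP_succ (q : ℂ) (k : ℕ) : qP q (k + 1) = qP q k * (1 - q ^ (k + 1)) := by
  unfold qP
  rw [prod_range_succ]

lemma one_sub_ne (q : ℂ) (hq : ‖q‖ < 1) (i : ℕ) : 1 - q ^ (i + 1) ≠ 0 := by
  intro h
  have h1 : q ^ (i + 1) = 1 := (sub_eq_zero.mp h).symm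
  have h2 : ‖q‖ ^ (i + 1) < 1 := pow_lt_one₀ (norm_nonneg _) hq (by omega)
  rw [← norm_pow, h1] at h2
  simp at h2

lemma qP_ne (q : ℂ) (hq : ‖q‖ < 1) (k : ℕ) : qP q k ≠ 0 :=
  prod_ne_zero_iff.mpr fun i _ => one_sub_ne q hq i

lemma jacE_add (q : ℂ) (m r : ℕ) : jacE q (m + r) m =
    (-1) ^ m * q ^ triT m * (qP q r)⁻¹ * (qP q (2 * m + r + 1))⁻¹ := by
  unfold jacE
  rw [if_pos (by omega)]
  congr 3
  · congr 1; omega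
  · congr 1; omega

lemma jacE_eq (q : ℂ) (n m r : ℕ) (h : n = m + r) : jacE q n m =
    (-1) ^ m * q ^ triT m * (qP q r)⁻¹ * (qP q (2 * m + r + 1))⁻¹ := by
  rw [h, jacE_add]

lemma jacE_of_lt (q : ℂ) (n m : ℕ) (h : n < m) : jacE q n m = 0 := by
  unfold jacE
  rw [if_neg (by omega)]

lemma jacE_rec_zero (q : ℂ) (hq : ‖q‖ < 1) (n : ℕ) :
    (1 - q ^ (2 * n + 2)) * (1 - q ^ (2 * n + 3)) * jacE q (n + 1) 0 =
      (1 + q ^ (2 * n + 2)) * jacE q n 0 - q ^ (n + 1) * (-jacE q n 0 + jacE q n 1) := by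
  have h1 := jacE_eq q (n + 1) 0 (n + 1) (by omega)
  have h2 := jacE_eq q n 0 n (by omega)
  rw [h1, h2]
  rcases n with _ | r
  · rw [jacE_of_lt _ _ _ (by omega)]
    have a1 := one_sub_ne q hq 0
    have a2 := one_sub_ne q hq 1
    simp [qP_succ, qP_zero, triT_zero] at *
    field_simp
    ring
  · have h3 := jacE_eq q (r + 1) 1 r (by omega)
    rw [h3]
    have a0 := qP_ne q hq r
    have a1 := one_sub_ne q hq r
    have a2 := one_sub_ne q hq (r + 1)
    have a3 := one_sub_ne q hq (r + 2)
    simp only [triT_succ, triT_zero, show 2 * 0 + (r + 1 + 1) + 1 = r + 1 + 1 + 1 by omega,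
      show 2 * 0 + (r + 1) + 1 = r + 1 + 1 by omega,
      show 2 * 1 + r + 1 = r + 1 + 1 + 1 by omega, qP_succ, zero_add]
    simp only [add_assoc, Nat.reduceAdd] at *
    field_simp
    ring

lemma jacE_rec_succ (q : ℂ) (hq : ‖q‖ < 1) (n m : ℕ) :
    (1 - q ^ (2 * n + 2)) * (1 - q ^ (2 * n + 3)) * jacE q (n + 1) (m + 1) =
      (1 + q ^ (2 * n + 2)) * jacE q n (m + 1)
        - q ^ (n + 1) * (jacE q n m + jacE q n (m + 2)) := by
  rcases lt_or_ge n m with h | h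
  · rw [jacE_of_lt _ _ _ (by omega), jacE_of_lt _ _ _ (by omega), jacE_of_lt _ _ _ (by omega),
      jacE_of_lt _ _ _ (by omega)]
    ring
  obtain ⟨r, rfl⟩ := Nat.exists_eq_add_of_le h
  have h1 := jacE_eq q (m + r + 1) (m + 1) r (by omega)
  have h2 := jacE_add q m r
  rw [h1, h2]
  have b0 := qP_ne q hq (2 * m + r + 1)
  have b1 := one_sub_ne q hq (2 * m + r + 1)
  have b2 := one_sub_ne q hq (2 * m + r + 2)
  rcases r with _ | _ | r
  · rw [jacE_of_lt _ _ _ (by omega), jacE_of_lt _ _ _ (by omega)]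
    simp only [triT_succ, show 2 * (m + 1) + 0 + 1 = 2 * m + 0 + 1 + 1 + 1 by omega,
      qP_succ _ (2 * m + 0 + 1 + 1), qP_succ _ (2 * m + 0 + 1), qP_zero]
    simp only [add_assoc, Nat.reduceAdd, add_zero, zero_add] at *
    field_simp
    ring
  · have h3 := jacE_eq q (m + (0 + 1)) (m + 1) 0 (by omega)
    rw [h3, jacE_of_lt _ _ _ (by omega)]
    have a1 : 1 - q ≠ 0 := by simpa using one_sub_ne q hq 0
    simp only [triT_succ, show 2 * (m + 1) + (0 + 1) + 1 = 2 * m + (0 + 1) + 1 + 1 + 1 by omega,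
      show 2 * (m + 1) + 0 + 1 = 2 * m + (0 + 1) + 1 + 1 by omega,
      qP_succ _ (2 * m + (0 + 1) + 1 + 1), qP_succ _ (2 * m + (0 + 1) + 1), qP_succ _ 0, qP_zero]
    simp only [add_assoc, Nat.reduceAdd, add_zero, zero_add, pow_one] at *
    field_simp
    ring
  · have h3 := jacE_eq q (m + (r + 1 + 1)) (m + 1) (r + 1) (by omega)
    have h4 := jacE_eq q (m + (r + 1 + 1)) (m + 2) r (by omega)
    rw [h3, h4]
    have a0 := qP_ne q hq r
    have a1 := one_sub_ne q hq r
    have a2 := one_sub_ne q hq (r + 1)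
    simp only [triT_succ,
      show 2 * (m + 1) + (r + 1 + 1) + 1 = 2 * m + (r + 1 + 1) + 1 + 1 + 1 by omega,
      show 2 * (m + 1) + (r + 1) + 1 = 2 * m + (r + 1 + 1) + 1 + 1 by omega,
      show 2 * (m + 2) + r + 1 = 2 * m + (r + 1 + 1) + 1 + 1 + 1 by omega,
      qP_succ _ (2 * m + (r + 1 + 1) + 1 + 1), qP_succ _ (2 * m + (r + 1 + 1) + 1),
      qP_succ _ (r + 1), qP_succ _ r]
    simp only [add_assoc, Nat.reduceAdd, add_zero, zero_add] at *
    field_simp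
    ring

lemma sum_rec (f g : ℕ → ℂ) (A B : ℂ) (h0 : g 0 = A * f 0 - B * (-f 0 + f 1))
    (h : ∀ m, g (m + 1) = A * f (m + 1) - B * (f m + f (m + 2))) (N : ℕ) :
    ∑ m ∈ range (N + 1), (2 * (m : ℂ) + 1) * g m =
      (A - 2 * B) * ∑ m ∈ range (N + 1), (2 * (m : ℂ) + 1) * f m
        + B * (2 * N + 3) * f N - B * (2 * N + 1) * f (N + 1) := by
  induction N with
  | zero => simp [h0]; ring
  | succ N ih =>
    rw [sum_range_succ, ih, h, sum_range_succ _ (N + 1)]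
    push_cast
    ring

lemma jac_finite (q : ℂ) (hq : ‖q‖ < 1) (n : ℕ) :
    ∑ m ∈ range (n + 1), (2 * (m : ℂ) + 1) * jacE q n m = qP q n ^ 2 / qP q (2 * n + 1) := by
  induction n with
  | zero => simp [jacE, triT_zero, qP_zero]
  | succ n ih =>
    have key := sum_rec (jacE q n)
      (fun m => (1 - q ^ (2 * n + 2)) * (1 - q ^ (2 * n + 3)) * jacE q (n + 1) m)
      (1 + q ^ (2 * n + 2)) (q ^ (n + 1)) (jacE_rec_zero q hq n) (jacE_rec_succ q hq n) (n + 1)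
    rw [jacE_of_lt q n (n + 1) (by omega), jacE_of_lt q n (n + 1 + 1) (by omega),
      sum_range_succ (fun m : ℕ => (2 * (m : ℂ) + 1) * jacE q n m), ih,
      jacE_of_lt q n (n + 1) (by omega)] at key
    have e : ∑ m ∈ range (n + 1 + 1), (2 * (m : ℂ) + 1) *
        ((1 - q ^ (2 * n + 2)) * (1 - q ^ (2 * n + 3)) * jacE q (n + 1) m) =
        ((1 - q ^ (2 * n + 2)) * (1 - q ^ (2 * n + 3))) *
        ∑ m ∈ range (n + 1 + 1), (2 * (m : ℂ) + 1) * jacE q (n + 1) m := by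
      rw [mul_sum]; exact sum_congr rfl fun m _ => by ring
    rw [e] at key
    have a1 := one_sub_ne q hq (2 * n + 1)
    have a2 := one_sub_ne q hq (2 * n + 2)
    have a0 := qP_ne q hq (2 * n + 1)
    refine mul_left_cancel₀ (mul_ne_zero a1 a2) (key.trans ?_)
    rw [show 2 * (n + 1) + 1 = 2 * n + 1 + 1 + 1 by omega, qP_succ _ (2 * n + 1 + 1),
      qP_succ _ (2 * n + 1), qP_succ _ n]
    simp only [add_assoc, Nat.reduceAdd] at *
    field_simp
    ring

lemma qP_tendsto (q : ℂ) (hq : ‖q‖ < 1) :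
    Tendsto (qP q) atTop (𝓝 (∏' n : ℕ, (1 - q ^ (n + 1)))) :=
  (ModularForm.multipliable_one_sub_pow hq).hasProd.tendsto_prod_nat

lemma qP_lim_ne (q : ℂ) (hq : ‖q‖ < 1) : ∏' n : ℕ, (1 - q ^ (n + 1)) ≠ 0 := by
  have := tprod_one_add_ne_zero_of_summable (f := fun n : ℕ => -q ^ (n + 1))
    (fun i => by simpa [sub_eq_add_neg] using one_sub_ne q hq i)
    (by
      simp only [norm_neg, norm_pow]
      exact (summable_nat_add_iff 1).mpr (summable_geometric_of_lt_one (norm_nonneg _) hq))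
  simpa [sub_eq_add_neg] using this

lemma bound_summable (r : ℝ) (h0 : 0 ≤ r) (h1 : r < 1) :
    Summable fun m : ℕ => (2 * (m : ℝ) + 1) * r ^ m := by
  have hn : ‖r‖ < 1 := by rwa [Real.norm_of_nonneg h0]
  have s1 := summable_pow_mul_geometric_of_norm_lt_one 1 hn
  have s0 := summable_geometric_of_lt_one h0 h1
  refine ((s1.mul_left 2).add s0).congr fun m => ?_
  simp
  ring

theorem jacobi_cube (q : ℂ) (hq : ‖q‖ < 1) :
    HasSum (fun m : ℕ => (2 * (m : ℂ) + 1) * ((-1) ^ m * q ^ triT m))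
      ((∏' n : ℕ, (1 - q ^ (n + 1))) ^ 3) := by
  set L := ∏' n : ℕ, (1 - q ^ (n + 1)) with hL
  have hL0 : L ≠ 0 := qP_lim_ne q hq
  have hP := qP_tendsto q hq
  rw [← hL] at hP
  have hI : Tendsto (fun k => (qP q k)⁻¹) atTop (𝓝 L⁻¹) := hP.inv₀ hL0
  obtain ⟨C, hC⟩ := hI.norm.bddAbove_range
  have hC' : ∀ k, ‖(qP q k)⁻¹‖ ≤ C := fun k => hC ⟨k, rfl⟩
  have hC0 : 0 ≤ C := (norm_nonneg _).trans (hC' 0)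
  have hn (m : ℕ) : ‖(2 * (m : ℂ) + 1)‖ = 2 * (m : ℝ) + 1 := by
    have : (2 * (m : ℂ) + 1) = ((2 * m + 1 : ℕ) : ℂ) := by push_cast; ring
    rw [this, Complex.norm_natCast]; push_cast; ring
  have hpow (m : ℕ) : ‖q‖ ^ triT m ≤ ‖q‖ ^ m :=
    pow_le_pow_of_le_one (norm_nonneg _) hq.le (le_triT m)
  have hs := bound_summable ‖q‖ (norm_nonneg _) hq
  have lim := tendsto_tsum_of_dominated_convergence
    (f := fun (n m : ℕ) => (2 * (m : ℂ) + 1) * jacE q n m)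
    (g := fun m : ℕ => (2 * (m : ℂ) + 1) * ((-1) ^ m * q ^ triT m * L⁻¹ * L⁻¹))
    (𝓕 := atTop) (hs.mul_right (C * C))
    (by
      intro m
      refine Tendsto.const_mul _ ?_
      have t1 : Tendsto (fun n => (qP q (n - m))⁻¹) atTop (𝓝 L⁻¹) :=
        hI.comp (tendsto_sub_atTop_nat m)
      have t2 : Tendsto (fun n => (qP q (n + m + 1))⁻¹) atTop (𝓝 L⁻¹) :=
        hI.comp (tendsto_add_atTop_nat (m + 1))
      refine ((t1.const_mul ((-1) ^ m * q ^ triT m)).mul t2).congr' ?_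
      filter_upwards [eventually_ge_atTop m] with n hnm
      simp [jacE, hnm])
    (by
      refine Eventually.of_forall fun n m => ?_
      rw [norm_mul, hn, mul_assoc]
      refine mul_le_mul_of_nonneg_left ?_ (by positivity)
      unfold jacE
      split_ifs
      · simp only [norm_mul, norm_pow, norm_neg, norm_one, one_pow, one_mul, mul_assoc]
        exact mul_le_mul (hpow m) (mul_le_mul (hC' _) (hC' _) (norm_nonneg _) hC0)
          (by positivity) (by positivity)
      · simp only [norm_zero]; positivity)
  have lim2 : Tendsto (fun n => qP q n ^ 2 / qP q (2 * n + 1)) atTop (𝓝 (L ^ 2 / L)) := by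
    refine (hP.pow 2).div (hP.comp ?_) hL0
    exact tendsto_atTop_mono (fun n => show n ≤ 2 * n + 1 by omega) tendsto_id
  have heq : (fun n => ∑' m : ℕ, (2 * (m : ℂ) + 1) * jacE q n m) =
      fun n => qP q n ^ 2 / qP q (2 * n + 1) := by
    funext n
    rw [← jac_finite q hq n]
    refine tsum_eq_sum fun m hm => ?_
    rw [jacE_of_lt q n m (by simpa using hm), mul_zero]
  rw [heq] at lim
  have hfin := tendsto_nhds_unique lim lim2
  have hsum : Summable fun m : ℕ => (2 * (m : ℂ) + 1) * ((-1) ^ m * q ^ triT m) := by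
    refine Summable.of_norm_bounded hs fun m => ?_
    rw [norm_mul, hn]
    simp only [norm_mul, norm_pow, norm_neg, norm_one, one_pow, one_mul]
    exact mul_le_mul_of_nonneg_left (hpow m) (by positivity)
  have e : ∑' m : ℕ, (2 * (m : ℂ) + 1) * ((-1) ^ m * q ^ triT m * L⁻¹ * L⁻¹) =
      (∑' m : ℕ, (2 * (m : ℂ) + 1) * ((-1) ^ m * q ^ triT m)) * (L⁻¹ * L⁻¹) := by
    rw [← tsum_mul_right]
    exact tsum_congr fun m => by ring
  rw [e] at hfin
  have : ∑' m : ℕ, (2 * (m : ℂ) + 1) * ((-1) ^ m * q ^ triT m) = L ^ 3 := by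
    generalize (∑' m : ℕ, (2 * (m : ℂ) + 1) * ((-1) ^ m * q ^ triT m)) = t at hfin ⊢
    field_simp at hfin
    exact hfin
  rw [← this]
  exact hsum.hasSum

/-- Jacobi's identity for `η(y⁸)³`. -/
lemma jacobi_eta (y : ℂ) (hy : ‖y‖ < 1) :
    HasSum (fun m : ℕ => (-1) ^ m * (2 * (m : ℂ) + 1) * y ^ ((2 * m + 1) ^ 2))
      (y * ∏' n : ℕ, (1 - y ^ (8 * (n + 1))) ^ 3) := by
  have hq : ‖y ^ 8‖ < 1 := by
    rw [norm_pow]; exact pow_lt_one₀ (norm_nonneg _) hy (by norm_num)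
  have h := (jacobi_cube (y ^ 8) hq).mul_left y
  rw [← (ModularForm.multipliable_one_sub_pow hq).tprod_pow 3] at h
  simp only [← pow_mul] at h
  refine h.congr_fun ?_ 
  intro m
  rw [← triT_sq, pow_succ]
  ring

lemma split_three (a : ℕ → ℂ) (hs : Summable a) :
    ∑' m, a m = ∑' j, a (3 * j) + ∑' j, a (3 * j + 1) + ∑' j, a (3 * j + 2) := by
  have h := Nat.sumByResidueClasses hs 3
  have h' : ∑' m, a m = ∑ j : Fin 3, ∑' m : ℕ, a (j.val + 3 * m) := h
  rw [h', Fin.sum_univ_three]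
  simp [add_comm]

theorem psi_eq_eta_cubed (x : ℂ) (hx : ‖x‖ < 1) :
    psi333 x = -x * (∏' n : ℕ, (1 - x ^ (8 * (n + 1))) ^ 3)
      - 3 * x ^ 9 * ∏' n : ℕ, (1 - x ^ (72 * (n + 1))) ^ 3 := by
  have h1 := jacobi_eta x hx
  have hx9 : ‖x ^ 9‖ < 1 := by
    rw [norm_pow]; exact pow_lt_one₀ (norm_nonneg _) hx (by norm_num)
  have h9 := jacobi_eta (x ^ 9) hx9
  simp only [← pow_mul, ← mul_assoc, Nat.reduceMul] at h9
  obtain ⟨a, ha⟩ : ∃ a : ℕ → ℂ,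
      a = fun m : ℕ => (-1) ^ m * (2 * (m : ℂ) + 1) * x ^ ((2 * m + 1) ^ 2) := ⟨_, rfl⟩
  rw [← ha] at h1
  have hs : Summable a := h1.summable
  have s0 : Summable fun j => a (3 * j) := hs.comp_injective fun i j h => by simpa using h
  have s1 : Summable fun j => a (3 * j + 1) := hs.comp_injective fun i j h => by simpa using h
  have s2 : Summable fun j => a (3 * j + 2) := hs.comp_injective fun i j h => by simpa using h
  have split : ∑' m, a m = ∑' j, a (3 * j) + ∑' j, a (3 * j + 1) + ∑' j, a (3 * j + 2) := by
    exact split_three a hs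
  have s3 : Summable fun j => a (3 * (j + 1)) := (summable_nat_add_iff 1).mpr s0
  have z : ∑' j, a (3 * j) = x + ∑' j, a (3 * (j + 1)) := by
    rw [s0.tsum_eq_zero_add]
    simp [ha]
  have mid : ∑' j, a (3 * j + 1) =
      -3 * (x ^ 9 * ∏' n : ℕ, (1 - x ^ (72 * (n + 1))) ^ 3) := by
    rw [← h9.tsum_eq, ← tsum_mul_left]
    refine tsum_congr fun j => ?_
    simp only [ha]
    rw [show (2 * (3 * j + 1) + 1) ^ 2 = 9 * (2 * j + 1) ^ 2 by ring, pow_succ, pow_mul]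
    push_cast
    norm_num
    ring
  have psi : psi333 x = -x - ∑' j, a (3 * (j + 1)) - ∑' j, a (3 * j + 2) := by
    unfold psi333
    rw [sub_sub, ← s3.tsum_add s2, sub_eq_add_neg, ← tsum_neg]
    congr 1
    refine tsum_congr fun j => ?_
    simp only [ha]
    rw [show 2 * (3 * (j + 1)) + 1 = 6 * j + 7 by ring,
      show 2 * (3 * j + 2) + 1 = 6 * j + 5 by ring, pow_mul, pow_add _ (3 * j), pow_mul]
    push_cast
    norm_num
    ring
  have tot := h1.tsum_eq
  rw [split, z, mid] at tot
  rw [psi]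
  linear_combination -tot
end

section
/- Let F(x) = ∏_{n=1}^∞ (1 − xⁿ). Then for every complex number x with |x| < 1, one has ( F(x⁸)³ + 3 x⁸ F(x^{72})³ )³ · F(x^{72})³ = F(x^{24})^{12} + 27 x^{24} F(x^{72})^{12}. (This is the cleared-denominator form of the identity (ψ(τ)/φ(τ))³ = (γ(τ)+3)³ = 27 + η(q)^{12}/η(q³)^{12}, asserting that the generalized SYZ map for ℙ¹_{3,3,3} equals the mirror map of the Hesse–Dixon family x³+y³+z³−(γ+3)xyz = 0.) -/
open scoped BigOperators

/-- The Euler product `F(x) = ∏_{n=1}^∞ (1 − xⁿ)`. -/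
noncomputable def eulerF (x : ℂ) : ℂ := ∏' n : ℕ, (1 - x ^ (n + 1))

open Filter Topology

namespace SYZ

/-- `tri k = k (k - 1) / 2`. -/
def tri : ℕ → ℕ
  | 0 => 0
  | k + 1 => tri k + k

lemma tri_add (a b : ℕ) : tri (a + b) = tri a + tri b + a * b := by
  induction b with
  | zero => simp [tri]
  | succ b ih => rw [← add_assoc]; simp only [tri]; rw [ih]; ring

lemma two_tri (k : ℕ) : 2 * tri k + k = k * k := by
  induction k with
  | zero => simp [tri]
  | succ b ih => simp only [tri]; nlinarith

lemma le_tri_succ (k : ℕ) : k ≤ tri (k + 1) := by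
  simp only [tri]; omega

/-- Gaussian binomial coefficients. -/
noncomputable def gb (q : ℂ) : ℕ → ℕ → ℂ
  | _, 0 => 1
  | 0, _ + 1 => 0
  | N + 1, m + 1 => q ^ (m + 1) * gb q N (m + 1) + gb q N m

lemma gb_zero_right (q : ℂ) (N : ℕ) : gb q N 0 = 1 := by cases N <;> rfl

lemma gb_succ (q : ℂ) (N m : ℕ) :
    gb q (N + 1) (m + 1) = q ^ (m + 1) * gb q N (m + 1) + gb q N m := rfl

lemma gb_eq_zero (q : ℂ) (N m : ℕ) (h : N < m) : gb q N m = 0 := by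
  induction N generalizing m with
  | zero => cases m with
    | zero => omega
    | succ m => rfl
  | succ N ih => cases m with
    | zero => omega
    | succ m => rw [gb_succ, ih _ (by omega), ih _ (by omega)]; simp

/-- Partial products. -/
noncomputable def pp (q : ℂ) (N : ℕ) : ℂ := ∏ k ∈ Finset.range N, (1 - q ^ (k + 1))

lemma pp_zero (q : ℂ) : pp q 0 = 1 := by simp [pp]

lemma pp_succ (q : ℂ) (N : ℕ) : pp q (N + 1) = pp q N * (1 - q ^ (N + 1)) := by
  simp [pp, Finset.prod_range_succ]

lemma gb_mul (q : ℂ) (s m k : ℕ) (hs : m + k = s) : gb q s m * pp q m * pp q k = pp q s := by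
  induction s generalizing m k with
  | zero =>
    obtain ⟨rfl, rfl⟩ : m = 0 ∧ k = 0 := by omega
    simp [gb_zero_right, pp_zero]
  | succ s ih =>
    cases m with
    | zero =>
      obtain rfl : k = s + 1 := by omega
      simp [gb_zero_right, pp_zero]
    | succ m =>
      rw [gb_succ]
      cases k with
      | zero =>
        obtain rfl : m = s := by omega
        rw [gb_eq_zero q m (m + 1) (by omega)]
        have := ih m 0 (by omega)
        rw [pp_zero] at this ⊢
        rw [pp_succ]
        linear_combination (1 - q ^ (m + 1)) * this
      | succ k =>
        have h1 := ih (m + 1) k (by omega)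
        have h2 := ih m (k + 1) (by omega)
        have h3 : q ^ (s + 1) = q ^ (m + 1) * q ^ (k + 1) := by
          rw [← pow_add]; congr 1; omega
        rw [pp_succ q s, h3]
        rw [pp_succ q k] at h2 ⊢
        rw [pp_succ q m] at h1 ⊢
        linear_combination q ^ (m + 1) * (1 - q ^ (k + 1)) * h1 + (1 - q ^ (m + 1)) * h2

lemma q_binomial (q w : ℂ) (N : ℕ) :
    ∏ k ∈ Finset.range N, (1 + w * q ^ k)
      = ∑ m ∈ Finset.range (N + 1), q ^ tri m * gb q N m * w ^ m := by
  induction N generalizing w with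
  | zero => simp [tri, gb_zero_right]
  | succ N ih =>
    rw [Finset.prod_range_succ']
    have h1 : ∏ k ∈ Finset.range N, (1 + w * q ^ (k + 1))
        = ∏ k ∈ Finset.range N, (1 + (w * q) * q ^ k) :=
      Finset.prod_congr rfl fun k _ => by ring
    rw [h1, ih, Finset.sum_range_succ' _ (N + 1)]
    have h2 : ∀ m ∈ Finset.range (N + 1), q ^ tri (m + 1) * gb q (N + 1) (m + 1) * w ^ (m + 1)
        = q ^ tri (m + 1) * gb q N (m + 1) * (w * q) ^ (m + 1)
          + w * (q ^ tri m * gb q N m * (w * q) ^ m) := by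
      intro m _
      rw [gb_succ]; simp only [tri]; ring
    rw [Finset.sum_congr rfl h2, Finset.sum_add_distrib, ← Finset.mul_sum]
    have h3 := Finset.sum_range_succ' (fun m => q ^ tri m * gb q N m * (w * q) ^ m) (N + 1)
    have h4 := Finset.sum_range_succ (fun m => q ^ tri m * gb q N m * (w * q) ^ m) (N + 1)
    rw [gb_eq_zero q N (N + 1) (by omega)] at h4
    simp only [tri, gb_zero_right] at h3 h4 ⊢
    linear_combination h3 - h4

/-- Derivative of the q-binomial theorem at the central zero. -/
lemma deriv_identity (q v : ℂ) (n : ℕ) (hv : v * q ^ n = 1) :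
    ∑ m ∈ Finset.range (2 * n + 1 + 1), q ^ tri m * gb q (2 * n + 1) m * ((-v) ^ m * m)
      = - ((∏ k ∈ Finset.range n, (1 + (-v) * q ^ k)) * pp q n) := by
  let R : ℂ → ℂ := fun z => (∏ k ∈ Finset.range n, (1 + (-v * z) * q ^ k)) *
    ∏ k ∈ Finset.range n, (1 + (-v * z) * q ^ (n + 1 + k))
  have hR : Differentiable ℂ R := by
    intro z
    exact (DifferentiableAt.fun_finsetProd fun i _ => by fun_prop).mul
      (DifferentiableAt.fun_finsetProd fun i _ => by fun_prop)
  have hf : (fun z : ℂ => ∑ m ∈ Finset.range (2 * n + 1 + 1),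
      q ^ tri m * gb q (2 * n + 1) m * (-v * z) ^ m) = fun z => (1 - z) * R z := by
    funext z
    rw [← q_binomial, show 2 * n + 1 = n + 1 + n by ring, Finset.prod_range_add,
      Finset.prod_range_succ]
    simp only [R]
    linear_combination (-z * (∏ k ∈ Finset.range n, (1 + (-v * z) * q ^ k)) *
      ∏ k ∈ Finset.range n, (1 + (-v * z) * q ^ (n + 1 + k))) * hv
  have h1 : HasDerivAt (fun z => (1 - z) * R z) (-1 * R 1 + (1 - 1) * deriv R 1) 1 :=
    ((hasDerivAt_id (1 : ℂ)).const_sub 1).mul (hR 1).hasDerivAt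
  have h2 : HasDerivAt (fun z : ℂ => ∑ m ∈ Finset.range (2 * n + 1 + 1),
      q ^ tri m * gb q (2 * n + 1) m * (-v * z) ^ m)
      (∑ m ∈ Finset.range (2 * n + 1 + 1), q ^ tri m * gb q (2 * n + 1) m * ((-v) ^ m * m)) 1 := by
    refine HasDerivAt.fun_sum fun m _ => ?_
    refine HasDerivAt.const_mul _ ?_
    have := ((hasDerivAt_pow m (1 : ℂ)).const_mul ((-v) ^ m))
    simp_rw [mul_pow]
    simpa using this
  rw [hf] at h2
  rw [h2.unique h1]
  have h3 : ∏ k ∈ Finset.range n, (1 + (-v * 1) * q ^ (n + 1 + k)) = pp q n := by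
    refine Finset.prod_congr rfl fun k _ => ?_
    rw [show n + 1 + k = n + (k + 1) by ring, pow_add]
    linear_combination (-q ^ (k + 1)) * hv
  simp only [R]
  rw [h3]; simp

lemma neg_prod (q v : ℂ) (n : ℕ) (hv : v * q ^ n = 1) :
    ∏ k ∈ Finset.range n, (1 + (-v) * q ^ k) = (-v) ^ n * q ^ tri n * pp q n := by
  have h : ∀ j ≤ n, (∏ k ∈ Finset.range j, (1 - q ^ (n - 1 - k + 1)))
      * ((-v) ^ j * q ^ tri j) = ∏ k ∈ Finset.range j, (1 + (-v) * q ^ k) := by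
    intro j hj
    induction j with
    | zero => simp [tri]
    | succ j ih =>
      rw [Finset.prod_range_succ, Finset.prod_range_succ, ← ih (by omega)]
      have h1 : q ^ (n - 1 - j + 1) * q ^ j = q ^ n := by
        rw [← pow_add]; congr 1; omega
      have h2 : 1 + -v * q ^ j = (1 - q ^ (n - 1 - j + 1)) * (-v * q ^ j) := by
        linear_combination -hv - v * h1
      rw [h2]; simp only [tri]; ring
  rw [← h n le_rfl, pp, ← Finset.prod_range_reflect (fun k => 1 - q ^ (k + 1))]
  ring

lemma one_sub_pow_ne_zero {q : ℂ} (hq : ‖q‖ < 1) (k : ℕ) : 1 - q ^ (k + 1) ≠ 0 := by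
  intro h
  have h1 : q ^ (k + 1) = 1 := (sub_eq_zero.mp h).symm
  have h2 : ‖q‖ ^ (k + 1) < 1 := pow_lt_one₀ (norm_nonneg _) hq (by omega)
  rw [← norm_pow, h1] at h2
  simp at h2

lemma pp_ne_zero {q : ℂ} (hq : ‖q‖ < 1) (n : ℕ) : pp q n ≠ 0 :=
  Finset.prod_ne_zero_iff.mpr fun k _ => one_sub_pow_ne_zero hq k

lemma gb_symm {q : ℂ} (hq : ‖q‖ < 1) (a b : ℕ) : gb q (a + b) a = gb q (a + b) b := by
  have h1 := gb_mul q (a + b) a b rfl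
  have h2 := gb_mul q (a + b) b a (by omega)
  have ha := pp_ne_zero hq a
  have hb := pp_ne_zero hq b
  apply mul_right_cancel₀ (mul_ne_zero ha hb)
  linear_combination h1 - h2

lemma finite_jacobi {q : ℂ} (hq : ‖q‖ < 1) (h0 : q ≠ 0) (n : ℕ) :
    pp q n ^ 2 = ∑ k ∈ Finset.range (n + 1),
      (-1) ^ k * (2 * k + 1) * q ^ tri (k + 1) * gb q (2 * n + 1) (n + 1 + k) := by
  have hqn : q ^ n ≠ 0 := pow_ne_zero _ h0
  obtain ⟨v, hv⟩ : ∃ v : ℂ, v * q ^ n = 1 := ⟨(q ^ n)⁻¹, inv_mul_cancel₀ hqn⟩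
  have hv0 : v ≠ 0 := left_ne_zero_of_mul_eq_one hv
  have h := deriv_identity q v n hv
  rw [neg_prod q v n hv, show 2 * n + 1 + 1 = (n + 1) + (n + 1) by ring,
    Finset.sum_range_add, ← Finset.sum_range_reflect, ← Finset.sum_add_distrib] at h
  have hE : (-v) ^ n * q ^ tri n ≠ 0 :=
    mul_ne_zero (pow_ne_zero _ (neg_ne_zero.mpr hv0)) (pow_ne_zero _ h0)
  apply mul_left_cancel₀ hE
  rw [Finset.mul_sum]
  have key : ∀ k ∈ Finset.range (n + 1),
      q ^ tri (n + 1 - 1 - k) * gb q (2 * n + 1) (n + 1 - 1 - k) *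
          ((-v) ^ (n + 1 - 1 - k) * ((n + 1 - 1 - k : ℕ) : ℂ)) +
        q ^ tri (n + 1 + k) * gb q (2 * n + 1) (n + 1 + k) *
          ((-v) ^ (n + 1 + k) * ((n + 1 + k : ℕ) : ℂ))
      = - ((-v) ^ n * q ^ tri n * ((-1) ^ k * (2 * k + 1) * q ^ tri (k + 1)
          * gb q (2 * n + 1) (n + 1 + k))) := by
    intro k hk
    obtain ⟨a, rfl⟩ : ∃ a, n = a + k :=
      ⟨n - k, by have := Finset.mem_range.mp hk; omega⟩
    rw [show a + k + 1 - 1 - k = a by omega]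
    have hs : gb q (2 * (a + k) + 1) a = gb q (2 * (a + k) + 1) (a + k + 1 + k) := by
      have := gb_symm hq a (a + k + 1 + k)
      rwa [show a + (a + k + 1 + k) = 2 * (a + k) + 1 by ring] at this
    have e1 : q ^ tri (a + k + 1 + k) * v ^ (a + k + 1 + k)
        = v ^ (a + k) * q ^ tri (a + k) * q ^ tri (k + 1) := by
      rw [show a + k + 1 + k = (a + k) + (k + 1) by ring, tri_add (a + k) (k + 1)]
      have : v ^ (k + 1) * q ^ ((a + k) * (k + 1)) = 1 := by
        rw [pow_mul, ← mul_pow, hv, one_pow]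
      rw [pow_add, pow_add, pow_add]
      linear_combination (v ^ (a + k) * q ^ tri (a + k) * q ^ tri (k + 1)) * this
    have e2 : q ^ tri a * v ^ a = v ^ (a + k) * q ^ tri (a + k) * q ^ tri (k + 1) := by
      have : v ^ k * q ^ ((a + k) * k) = 1 := by
        rw [pow_mul, ← mul_pow, hv, one_pow]
      have e : tri (a + k) + tri (k + 1) = tri a + (a + k) * k := by
        rw [tri_add]; simp only [tri]
        have := two_tri k
        nlinarith
      rw [mul_assoc, ← pow_add, e, pow_add, pow_add]
      linear_combination (-(v ^ a * q ^ tri a)) * this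
    have e3 : (-v) ^ (a + k + 1 + k) = -(-1) ^ (a) * v ^ (a + k + 1 + k) := by
      rw [neg_pow, show a + k + 1 + k = a + 2 * k + 1 by ring, pow_succ, pow_add, pow_mul]
      simp
    have e4 : (-v) ^ (a + k) * (-1) ^ k = (-1) ^ a * v ^ (a + k) := by
      rw [neg_pow, pow_add (-1 : ℂ) a k]
      have : ((-1 : ℂ) ^ k) * (-1) ^ k = 1 := by rw [← mul_pow]; simp
      linear_combination ((-1) ^ a * v ^ (a + k)) * this
    rw [hs, e3, neg_pow v a]
    push_cast
    generalize gb q (2 * (a + k) + 1) (a + k + 1 + k) = G at *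
    linear_combination ((-1) ^ a * a * G) * e2 - ((-1) ^ a * G * (a + k + 1 + k)) * e1
      + (q ^ tri (a + k) * (2 * k + 1) * q ^ tri (k + 1) * G) * e4
  rw [Finset.sum_congr rfl key, Finset.sum_neg_distrib] at h
  linear_combination h

lemma eulerF_ne_zero {q : ℂ} (hq : ‖q‖ < 1) : eulerF q ≠ 0 := by
  refine tprod_one_add_ne_zero_of_summable (f := fun n : ℕ ↦ -q ^ (n + 1)) ?_ ?_
  · exact fun i ↦ by simpa [sub_eq_add_neg] using one_sub_pow_ne_zero hq i
  · simpa using (summable_nat_add_iff 1).mpr (summable_geometric_of_lt_one (norm_nonneg _) hq)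

lemma tendsto_pp {q : ℂ} (hq : ‖q‖ < 1) : Tendsto (pp q) atTop (𝓝 (eulerF q)) :=
  (ModularForm.multipliable_one_sub_pow hq).tendsto_prod_tprod_nat

/-- Terms of Jacobi's series. -/
noncomputable def jt (q : ℂ) (k : ℕ) : ℂ := (-1) ^ k * (2 * k + 1) * q ^ tri (k + 1)

lemma norm_jt_le {q : ℂ} (hq : ‖q‖ < 1) (k : ℕ) : ‖jt q k‖ ≤ (2 * k + 1) * ‖q‖ ^ k := by
  have h1 : ‖(2 * (k : ℂ) + 1)‖ = 2 * k + 1 := by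
    have : (2 * (k : ℂ) + 1) = ((2 * k + 1 : ℕ) : ℂ) := by push_cast; ring
    rw [this, Complex.norm_natCast]; push_cast; ring
  simp only [jt, norm_mul, norm_pow, norm_neg, norm_one, one_pow, one_mul, h1]
  exact mul_le_mul_of_nonneg_left
    (pow_le_pow_of_le_one (norm_nonneg _) hq.le (le_tri_succ k)) (by positivity)

lemma summable_bound {q : ℂ} (hq : ‖q‖ < 1) :
    Summable fun k : ℕ => (2 * k + 1 : ℝ) * ‖q‖ ^ k := by
  have h1 := summable_pow_mul_geometric_of_norm_lt_one 1 (r := ‖q‖) (by simpa using hq)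
  have h2 := summable_geometric_of_lt_one (norm_nonneg q) hq
  refine ((h1.mul_left 2).add h2).congr fun k => ?_
  ring

lemma summable_jt {q : ℂ} (hq : ‖q‖ < 1) : Summable (jt q) :=
  Summable.of_norm_bounded (summable_bound hq) (norm_jt_le hq)

lemma jacobi {q : ℂ} (hq : ‖q‖ < 1) (h0 : q ≠ 0) : eulerF q ^ 3 = ∑' k, jt q k := by
  have hF := eulerF_ne_zero hq
  have hT := tendsto_pp hq
  have hI : Tendsto (fun n => (pp q n)⁻¹) atTop (𝓝 (eulerF q)⁻¹) := hT.inv₀ hF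
  obtain ⟨M, hM⟩ : ∃ M, ∀ n, ‖pp q n‖ ≤ M := by
    obtain ⟨M, hM⟩ := (Metric.isBounded_range_of_tendsto _ hT).exists_norm_le
    exact ⟨M, fun n => hM _ ⟨n, rfl⟩⟩
  obtain ⟨C, hC⟩ : ∃ C, ∀ n, ‖(pp q n)⁻¹‖ ≤ C := by
    obtain ⟨M, hM⟩ := (Metric.isBounded_range_of_tendsto _ hI).exists_norm_le
    exact ⟨M, fun n => hM _ ⟨n, rfl⟩⟩
  have hM0 : 0 ≤ M := (norm_nonneg _).trans (hM 0)
  have hC0 : 0 ≤ C := (norm_nonneg _).trans (hC 0)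
  have ha : ∀ n k, k ≤ n → pp q n * gb q (2 * n + 1) (n + 1 + k)
      = pp q n * pp q (2 * n + 1) * (pp q (n + 1 + k))⁻¹ * (pp q (n - k))⁻¹ := by
    intro n k hk
    have h := gb_mul q (2 * n + 1) (n + 1 + k) (n - k) (by omega)
    have h1 := pp_ne_zero hq (n + 1 + k)
    have h2 := pp_ne_zero hq (n - k)
    rw [← h]; field_simp
  have hfin : ∀ n, pp q n ^ 3 = ∑' k, jt q k * (pp q n * gb q (2 * n + 1) (n + 1 + k)) := by
    intro n
    rw [tsum_eq_sum (s := Finset.range (n + 1))]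
    · rw [pow_succ, finite_jacobi hq h0, Finset.sum_mul]
      refine Finset.sum_congr rfl fun k _ => ?_
      rw [jt]; ring
    · intro k hk
      rw [gb_eq_zero]
      · simp
      · simp at hk; omega
  have hlim : Tendsto (fun n => ∑' k, jt q k * (pp q n * gb q (2 * n + 1) (n + 1 + k))) atTop
      (𝓝 (∑' k, jt q k)) := by
    refine tendsto_tsum_of_dominated_convergence
      (bound := fun k => ((2 * k + 1 : ℝ) * ‖q‖ ^ k) * (M * M * C * C))
      ((summable_bound hq).mul_right _) ?_ ?_
    · intro k
      have : Tendsto (fun n => jt q k * (pp q n * pp q (2 * n + 1) * (pp q (n + 1 + k))⁻¹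
          * (pp q (n - k))⁻¹)) atTop
          (𝓝 (jt q k * (eulerF q * eulerF q * (eulerF q)⁻¹ * (eulerF q)⁻¹))) := by
        refine tendsto_const_nhds.mul (((hT.mul (hT.comp ?_)).mul (hI.comp ?_)).mul (hI.comp ?_))
        · exact tendsto_atTop_mono (fun n => by simp only [id]; omega) tendsto_id
        · exact tendsto_atTop_mono (fun n => by simp only [id]; omega) tendsto_id
        · exact tendsto_sub_atTop_nat k
      have e : jt q k * (eulerF q * eulerF q * (eulerF q)⁻¹ * (eulerF q)⁻¹) = jt q k := by
        field_simp
      rw [e] at this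
      refine this.congr' ?_
      filter_upwards [eventually_ge_atTop k] with n hn
      rw [ha n k hn]
    · refine Eventually.of_forall fun n k => ?_
      rw [norm_mul]
      refine mul_le_mul (norm_jt_le hq k) ?_ (norm_nonneg _) (by positivity)
      by_cases hk : k ≤ n
      · rw [ha n k hk]
        simp only [norm_mul]
        gcongr <;> first | apply hM | apply hC
      · rw [gb_eq_zero _ _ _ (by omega)]
        simp; positivity
  refine tendsto_nhds_unique (hT.pow 3) ?_
  exact hlim.congr fun n => (hfin n).symm

/-- The only terms not invariant under `q ↦ ω q` are those with index `3 m + 1`. -/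
lemma jacobi_twist {q w : ℂ} (hq : ‖q‖ < 1) (h0 : q ≠ 0) (hw : w ^ 3 = 1) :
    eulerF (w * q) ^ 3 = eulerF q ^ 3 - 3 * (w - 1) * q * eulerF (q ^ 9) ^ 3 := by
  have hw1 : ‖w‖ = 1 := by
    have : ‖w‖ ^ 3 = 1 := by rw [← norm_pow, hw, norm_one]
    exact (pow_eq_one_iff_of_nonneg (norm_nonneg _) (by norm_num)).mp this
  have hw0 : w ≠ 0 := by rintro rfl; simp at hw1
  have hwq : ‖w * q‖ < 1 := by rw [norm_mul, hw1, one_mul]; exact hq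
  have hq9 : ‖q ^ 9‖ < 1 := by rw [norm_pow]; exact pow_lt_one₀ (norm_nonneg _) hq (by norm_num)
  rw [jacobi hwq (mul_ne_zero hw0 h0), jacobi hq h0, jacobi hq9 (pow_ne_zero _ h0)]
  have hd : ∑' k, jt (w * q) k - ∑' k, jt q k = ∑' k, (jt (w * q) k - jt q k) :=
    ((summable_jt hwq).tsum_sub (summable_jt hq)).symm
  have hpow : ∀ m r, w ^ (3 * m + r) = w ^ r := by
    intro m r; rw [pow_add, pow_mul, hw, one_pow, one_mul]
  have t0 : ∀ m, tri (3 * m + 1) = 3 * (3 * tri m + 2 * m) := by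
    intro m
    induction m with
    | zero => simp [tri]
    | succ m ih =>
      rw [show 3 * (m + 1) + 1 = (3 * m + 1) + 3 by ring, tri_add, ih]; simp [tri]; ring
  have t1 : ∀ m, tri (3 * m + 2) = 9 * tri (m + 1) + 1 := by
    intro m
    have := t0 m
    simp only [tri] at *; omega
  have t2 : ∀ m, tri (3 * m + 3) = 3 * (3 * tri (m + 1) + 1 + m) := by
    intro m
    have := t1 m
    simp only [tri] at *; omega
  have hinj : Function.Injective (fun m : ℕ => 3 * m + 1) := fun a b h => by
    simp only at h; omega
  have hsupp : Function.support (fun k => jt (w * q) k - jt q k)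
      ⊆ Set.range (fun m : ℕ => 3 * m + 1) := by
    intro k hk
    by_contra hne
    apply hk
    obtain ⟨m, h | h | h⟩ : ∃ m, k = 3 * m ∨ k = 3 * m + 1 ∨ k = 3 * m + 2 :=
      ⟨k / 3, by omega⟩
    · subst h
      simp only [jt, mul_pow, t0]
      have := hpow (3 * tri m + 2 * m) 0
      rw [add_zero] at this
      rw [this]; ring
    · exact absurd ⟨m, h.symm⟩ hne
    · subst h
      simp only [jt, mul_pow, t2]
      have := hpow (3 * tri (m + 1) + 1 + m) 0
      rw [add_zero] at this
      rw [this]; ring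
  rw [← hinj.tsum_eq hsupp] at hd
  have hterm : ∀ m, jt (w * q) (3 * m + 1) - jt q (3 * m + 1)
      = (-(3 * (w - 1) * q)) * jt (q ^ 9) m := by
    intro m
    simp only [jt, mul_pow]
    rw [show 3 * m + 1 + 1 = 3 * m + 2 by ring, t1,
      show w ^ (9 * tri (m + 1) + 1) = w by
        rw [show 9 * tri (m + 1) + 1 = 3 * (3 * tri (m + 1)) + 1 by ring, hpow, pow_one],
      ← pow_mul]
    have : ((-1 : ℂ)) ^ (3 * m + 1) = - (-1) ^ m := by
      rw [pow_succ, pow_mul]; norm_num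
    rw [this]; push_cast; ring
  simp only [hterm] at hd
  rw [tsum_mul_left] at hd
  linear_combination hd

lemma finite_prod (y w : ℂ) (hw : w ^ 2 + w + 1 = 0) (N : ℕ) :
    pp y (3 * N) * pp (w * y) (3 * N) * pp (w ^ 2 * y) (3 * N) * pp (y ^ 9) N
      = pp (y ^ 3) (3 * N) * pp (y ^ 3) N ^ 3 := by
  have hw3 : w ^ 3 = 1 := by linear_combination (w - 1) * hw
  have hpow : ∀ m r, w ^ (3 * m + r) = w ^ r := by
    intro m r; rw [pow_add, pow_mul, hw3, one_pow, one_mul]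
  induction N with
  | zero => simp [pp_zero]
  | succ N ih =>
    rw [show 3 * (N + 1) = 3 * N + 1 + 1 + 1 by ring]
    simp only [pp_succ]
    have f1 : (1 - y ^ (3 * N + 1)) * (1 - (w * y) ^ (3 * N + 1))
        * (1 - (w ^ 2 * y) ^ (3 * N + 1)) = 1 - (y ^ 3) ^ (3 * N + 1) := by
      rw [mul_pow, mul_pow, ← pow_mul, mul_comm 2, pow_mul w, hpow N 1, ← pow_mul y 3,
        mul_comm 3 (3 * N + 1), pow_mul y (3 * N + 1) 3]
      generalize y ^ (3 * N + 1) = t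
      linear_combination (-t + t ^ 2 * w - t ^ 3 * (w - 1)) * hw
    have f2 : (1 - y ^ (3 * N + 1 + 1)) * (1 - (w * y) ^ (3 * N + 1 + 1))
        * (1 - (w ^ 2 * y) ^ (3 * N + 1 + 1)) = 1 - (y ^ 3) ^ (3 * N + 1 + 1) := by
      rw [mul_pow, mul_pow, ← pow_mul, mul_comm 2, pow_mul w, hpow N 2, ← pow_mul y 3,
        mul_comm 3 (3 * N + 1 + 1), pow_mul y (3 * N + 1 + 1) 3]
      generalize y ^ (3 * N + 1 + 1) = t
      have h4 : w ^ 4 = w := by linear_combination w * hw3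
      have h6 : w ^ 6 = 1 := by linear_combination (w ^ 3 + 1) * hw3
      linear_combination (-t + t ^ 2) * hw + (t ^ 2 - t) * h4 + (t ^ 2 - t ^ 3) * h6
    have f3 : (w * y) ^ (3 * N + 1 + 1 + 1) = (y ^ 3) ^ (N + 1) := by
      rw [show 3 * N + 1 + 1 + 1 = 3 * (N + 1) by ring, pow_mul, mul_pow, hw3, one_mul]
    have f4 : (w ^ 2 * y) ^ (3 * N + 1 + 1 + 1) = (y ^ 3) ^ (N + 1) := by
      rw [show 3 * N + 1 + 1 + 1 = 3 * (N + 1) by ring, pow_mul, mul_pow, ← pow_mul,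
        mul_comm 2 3, pow_mul, hw3, one_pow, one_mul]
    have f5 : y ^ (3 * N + 1 + 1 + 1) = (y ^ 3) ^ (N + 1) := by
      rw [show 3 * N + 1 + 1 + 1 = 3 * (N + 1) by ring, pow_mul]
    have f6 : (y ^ 9) ^ (N + 1) = (y ^ 3) ^ (3 * N + 1 + 1 + 1) := by
      rw [← pow_mul, ← pow_mul]; congr 1; ring
    rw [f3, f4, f5, f6, ← f1, ← f2]
    linear_combination ((1 - y ^ (3 * N + 1)) * (1 - (w * y) ^ (3 * N + 1))
        * (1 - (w ^ 2 * y) ^ (3 * N + 1)) * ((1 - y ^ (3 * N + 1 + 1))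
        * (1 - (w * y) ^ (3 * N + 1 + 1)) * (1 - (w ^ 2 * y) ^ (3 * N + 1 + 1)))
        * (1 - (y ^ 3) ^ (N + 1)) ^ 3 * (1 - (y ^ 3) ^ (3 * N + 1 + 1 + 1))) * ih

lemma inf_prod {y w : ℂ} (hy : ‖y‖ < 1) (hw : w ^ 2 + w + 1 = 0) :
    eulerF y * eulerF (w * y) * eulerF (w ^ 2 * y) * eulerF (y ^ 9) = eulerF (y ^ 3) ^ 4 := by
  have hw3 : w ^ 3 = 1 := by linear_combination (w - 1) * hw
  have hw1 : ‖w‖ = 1 := by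
    have : ‖w‖ ^ 3 = 1 := by rw [← norm_pow, hw3, norm_one]
    exact (pow_eq_one_iff_of_nonneg (norm_nonneg _) (by norm_num)).mp this
  have hwy : ‖w * y‖ < 1 := by rw [norm_mul, hw1, one_mul]; exact hy
  have hwwy : ‖w ^ 2 * y‖ < 1 := by rw [norm_mul, norm_pow, hw1, one_pow, one_mul]; exact hy
  have hy9 : ‖y ^ 9‖ < 1 := by rw [norm_pow]; exact pow_lt_one₀ (norm_nonneg _) hy (by norm_num)
  have hy3 : ‖y ^ 3‖ < 1 := by rw [norm_pow]; exact pow_lt_one₀ (norm_nonneg _) hy (by norm_num)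
  have h3 : Tendsto (fun N : ℕ => 3 * N) atTop atTop :=
    tendsto_atTop_mono (fun n => by simp only [id]; omega) tendsto_id
  have hl := (((((tendsto_pp hy).comp h3).mul ((tendsto_pp hwy).comp h3)).mul
    ((tendsto_pp hwwy).comp h3))).mul (tendsto_pp hy9)
  have hr := ((tendsto_pp hy3).comp h3).mul ((tendsto_pp hy3).pow 3)
  have := tendsto_nhds_unique (hl.congr fun N => finite_prod y w hw N) hr
  rw [this]; ring

lemma main {y : ℂ} (hy : ‖y‖ < 1) (h0 : y ≠ 0) :
    (eulerF y ^ 3 + 3 * y * eulerF (y ^ 9) ^ 3) ^ 3 * eulerF (y ^ 9) ^ 3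
      = eulerF (y ^ 3) ^ 12 + 27 * y ^ 3 * eulerF (y ^ 9) ^ 12 := by
  obtain ⟨w, hw⟩ : ∃ w : ℂ, w ^ 2 + w + 1 = 0 := by
    have hprim := Complex.isPrimitiveRoot_exp 3 (by norm_num)
    have := hprim.geom_sum_eq_zero (by norm_num)
    simp only [Finset.sum_range_succ, Finset.sum_range_zero] at this
    exact ⟨_, by linear_combination this⟩
  have hw3 : w ^ 3 = 1 := by linear_combination (w - 1) * hw
  have hw6 : (w ^ 2) ^ 3 = 1 := by rw [← pow_mul, mul_comm, pow_mul, hw3, one_pow]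
  have h1 := jacobi_twist hy h0 hw3
  have h2 := jacobi_twist hy h0 hw6
  have h3 := inf_prod hy hw
  have h4 : eulerF y ^ 3 * eulerF (w * y) ^ 3 * eulerF (w ^ 2 * y) ^ 3 * eulerF (y ^ 9) ^ 3
      = eulerF (y ^ 3) ^ 12 := by
    rw [← mul_pow, ← mul_pow, ← mul_pow, h3]; ring
  rw [h1, h2] at h4
  rw [← h4]
  generalize eulerF (y ^ 9) = B
  generalize eulerF y = Y
  have e : Y ^ 3 * (Y ^ 3 - 3 * (w - 1) * y * B ^ 3) * (Y ^ 3 - 3 * (w ^ 2 - 1) * y * B ^ 3)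
      = (Y ^ 3 + 3 * y * B ^ 3) ^ 3 - 27 * y ^ 3 * B ^ 9 := by
    linear_combination (-(Y ^ 3 + 3 * y * B ^ 3) ^ 2 * (3 * y * B ^ 3)
      + (Y ^ 3 + 3 * y * B ^ 3) * (3 * y * B ^ 3) ^ 2 * w - (3 * y * B ^ 3) ^ 3 * (w - 1)) * hw
  rw [e]; ring

end SYZ

/-- Cleared-denominator form of `(ψ/φ)³ = 27 + η(q)¹²/η(q³)¹²` (with `q = x²⁴`):
`(F(x⁸)³ + 3x⁸F(x⁷²)³)³ · F(x⁷²)³ = F(x²⁴)¹² + 27x²⁴F(x⁷²)¹²` for `|x| < 1`. -/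
theorem syz_eq_mirror_map_333 (x : ℂ) (hx : ‖x‖ < 1) :
    (eulerF (x ^ 8) ^ 3 + 3 * x ^ 8 * eulerF (x ^ 72) ^ 3) ^ 3 * eulerF (x ^ 72) ^ 3
      = eulerF (x ^ 24) ^ 12 + 27 * x ^ 24 * eulerF (x ^ 72) ^ 12 := by
  by_cases h0 : x = 0
  · subst h0
    simp [eulerF]
  · have hx8 : ‖x ^ 8‖ < 1 := by
      rw [norm_pow]; exact pow_lt_one₀ (norm_nonneg _) hx (by norm_num)
    have h := SYZ.main hx8 (pow_ne_zero 8 h0)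
    rw [← pow_mul, ← pow_mul] at h
    exact h
end

section
/- Let E₂(q) = 1 − 24 Σ_{n=1}^∞ σ₁(n) qⁿ. Then for every complex number q with |q| < 1, one has Σ_{a≥0, b≥0} (−1)^b (2a+1) q^{(b+1)(b+2a+2)/2} = ( 1 − E₂(q) ) / 24, where the exponent (b+1)(b+2a+2)/2 is always a positive integer. -/
open scoped BigOperators

/-- The weight-2 Eisenstein series `E₂(q) = 1 − 24 Σ_{n=1}^∞ σ₁(n) qⁿ`. -/
noncomputable def E2 (q : ℂ) : ℂ :=
  1 - 24 * ∑' n : ℕ, (ArithmeticFunction.sigma 1 (n + 1) : ℂ) * q ^ (n + 1)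

namespace E2Aux

/-- Exponent as a function of the index pair. -/
def ex (p : ℕ × ℕ) : ℕ := (p.2 + 1) * (p.2 + 2 * p.1 + 2) / 2

lemma two_ex (p : ℕ × ℕ) : 2 * ex p = (p.2 + 1) * (p.2 + 2 * p.1 + 2) := by
  unfold ex
  apply Nat.mul_div_cancel'
  rcases Nat.even_or_odd p.2 with h | h
  · obtain ⟨k, hk⟩ := h
    exact Dvd.dvd.mul_left ⟨k + p.1 + 1, by omega⟩ _
  · obtain ⟨k, hk⟩ := h
    exact Dvd.dvd.mul_right ⟨k + 1, by omega⟩ _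

lemma le_ex (p : ℕ × ℕ) : p.1 + p.2 + 1 ≤ ex p := by
  have := two_ex p
  nlinarith [Nat.zero_le (p.2 * p.1), Nat.zero_le (p.2 * p.2), Nat.le_mul_self p.2]

/-- The index pairs with exponent `n`. -/
def fib (n : ℕ) : Finset (ℕ × ℕ) :=
  (Finset.range n ×ˢ Finset.range n).filter (fun p => ex p = n)

lemma mem_fib {n : ℕ} {p : ℕ × ℕ} : p ∈ fib n ↔ ex p = n := by
  have := le_ex p
  simp only [fib, Finset.mem_filter, Finset.mem_product, Finset.mem_range]
  constructor
  · exact fun h => h.2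
  · intro h; refine ⟨⟨?_, ?_⟩, h⟩ <;> omega

lemma ex_eq_iff {n : ℕ} {p : ℕ × ℕ} :
    ex p = n ↔ (p.2 + 1) * (p.2 + 2 * p.1 + 2) = 2 * n := by
  have := two_ex p
  omega

lemma sum_fib (n : ℕ) (hn : n ≠ 0) :
    ∑ p ∈ fib n, (-1 : ℤ) ^ p.2 * (2 * (p.1 : ℤ) + 1)
      = ∑ d ∈ n.divisors.filter Odd, (2 * ((n / d : ℕ) : ℤ) - d) := by
  refine Finset.sum_bij'
    (fun p _ => if Even p.2 then p.2 + 1 else p.2 + 2 * p.1 + 2)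
    (fun d _ => if d < 2 * (n / d) then ((2 * (n / d) - d - 1) / 2, d - 1)
      else ((d - 2 * (n / d) - 1) / 2, 2 * (n / d) - 1)) ?_ ?_ ?_ ?_ ?_
  · rintro ⟨a, b⟩ h
    rw [mem_fib, ex_eq_iff] at h
    simp only at h ⊢
    rw [Finset.mem_filter, Nat.mem_divisors]
    split_ifs with hb
    · obtain ⟨k, rfl⟩ := hb
      refine ⟨⟨⟨k + a + 1, by linarith⟩, hn⟩, ⟨k, by ring⟩⟩
    · rw [Nat.not_even_iff_odd] at hb
      obtain ⟨k, rfl⟩ := hb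
      refine ⟨⟨⟨k + 1, by linarith⟩, hn⟩, ⟨k + a + 1, by ring⟩⟩
  · intro d h
    rw [Finset.mem_filter, Nat.mem_divisors] at h
    obtain ⟨⟨⟨e, rfl⟩, -⟩, ⟨k, rfl⟩⟩ := h
    have he : e ≠ 0 := by rintro rfl; simp at hn
    rw [Nat.mul_div_cancel_left _ (by omega)]
    split_ifs with hd
    · rw [mem_fib, ex_eq_iff]
      obtain ⟨t, rfl⟩ : ∃ t, e = k + 1 + t := ⟨e - k - 1, by omega⟩
      have h1 : (2 * (k + 1 + t) - (2 * k + 1) - 1) / 2 = t := by omega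
      simp only [h1, Nat.add_sub_cancel]
      ring
    · rw [mem_fib, ex_eq_iff]
      obtain ⟨t, rfl⟩ : ∃ t, k = e + t := ⟨k - e, by omega⟩
      obtain ⟨s, rfl⟩ : ∃ s, e = s + 1 := ⟨e - 1, by omega⟩
      have h1 : (2 * (s + 1 + t) + 1 - 2 * (s + 1) - 1) / 2 = t := by omega
      have h2 : 2 * (s + 1) - 1 = 2 * s + 1 := by omega
      simp only [h1, h2]
      ring
  · rintro ⟨a, b⟩ h
    rw [mem_fib, ex_eq_iff] at h
    simp only at h ⊢
    by_cases hb : Even b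
    · simp only [hb, if_true]
      obtain ⟨k, rfl⟩ := hb
      have : n = (k + k + 1) * (k + a + 1) := by linarith
      rw [this, Nat.mul_div_cancel_left _ (by omega), if_pos (by omega)]
      ext <;> simp only <;> omega
    · simp only [hb, if_false]
      rw [Nat.not_even_iff_odd] at hb
      obtain ⟨k, rfl⟩ := hb
      have : n = (2 * k + 1 + 2 * a + 2) * (k + 1) := by linarith
      rw [this, Nat.mul_div_cancel_left _ (by omega), if_neg (by omega)]
      ext <;> simp only <;> omega
  · intro d h
    rw [Finset.mem_filter, Nat.mem_divisors] at h
    obtain ⟨⟨⟨e, rfl⟩, -⟩, ⟨k, rfl⟩⟩ := h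
    have he : e ≠ 0 := by rintro rfl; simp at hn
    rw [Nat.mul_div_cancel_left _ (by omega)]
    by_cases hd : 2 * k + 1 < 2 * e
    · simp only [hd, if_true]
      rw [if_pos ⟨k, by omega⟩]
      omega
    · simp only [hd, if_false]
      rw [if_neg (by rw [Nat.not_even_iff_odd]; exact ⟨e - 1, by omega⟩)]
      omega
  · rintro ⟨a, b⟩ h
    rw [mem_fib, ex_eq_iff] at h
    simp only at h ⊢
    by_cases hb : Even b
    · simp only [hb, if_true, hb.neg_one_pow]
      obtain ⟨k, rfl⟩ := hb
      have : n = (k + k + 1) * (k + a + 1) := by linarith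
      rw [this, Nat.mul_div_cancel_left _ (by omega)]
      push_cast; ring
    · simp only [hb, if_false]
      rw [Nat.not_even_iff_odd] at hb
      rw [hb.neg_one_pow]
      obtain ⟨k, rfl⟩ := hb
      have : n = (2 * k + 1 + 2 * a + 2) * (k + 1) := by linarith
      rw [this, Nat.mul_div_cancel_left _ (by omega)]
      push_cast; ring

lemma sum_odd (n : ℕ) (hn : n ≠ 0) :
    ∑ d ∈ n.divisors.filter Odd, (2 * ((n / d : ℕ) : ℤ) - d)
      = (ArithmeticFunction.sigma 1 n : ℤ) := by
  obtain ⟨s, m, hm, rfl⟩ := Nat.exists_eq_two_pow_mul_odd hn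
  have hm0 : m ≠ 0 := by rintro rfl; simp at hn
  have hf : (2 ^ s * m).divisors.filter Odd = m.divisors := by
    ext d
    simp only [Finset.mem_filter, Nat.mem_divisors]
    constructor
    · rintro ⟨⟨h, -⟩, ho⟩
      exact ⟨(Nat.Coprime.pow_right s (Nat.coprime_two_right.mpr ho)).dvd_of_dvd_mul_left h, hm0⟩
    · rintro ⟨h, -⟩
      exact ⟨⟨h.mul_left _, hn⟩, hm.of_dvd_nat h⟩
  have hc : Nat.Coprime (2 ^ s) m := Nat.Coprime.pow_left s (Nat.coprime_two_left.mpr hm)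
  have hσ2 : ((ArithmeticFunction.sigma 1 (2 ^ s) : ℕ) : ℤ) = 2 ^ (s + 1) - 1 := by
    rw [ArithmeticFunction.sigma_one_apply_prime_pow Nat.prime_two]
    have := Nat.geomSum_eq (le_refl 2) (s + 1)
    rw [this]
    have h1 : 1 ≤ 2 ^ (s + 1) := Nat.one_le_two_pow
    simp [Nat.cast_sub h1]
  rw [hf, ArithmeticFunction.isMultiplicative_sigma.map_mul_of_coprime hc]
  push_cast
  rw [hσ2, ArithmeticFunction.sigma_one_apply, Finset.sum_sub_distrib]
  have h1 : ∑ d ∈ m.divisors, 2 * ((2 ^ s * m / d : ℕ) : ℤ)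
      = 2 ^ (s + 1) * ∑ d ∈ m.divisors, (d : ℤ) := by
    rw [← Nat.sum_div_divisors m (fun d => (d : ℤ)), Finset.mul_sum]
    refine Finset.sum_congr rfl fun d hd => ?_
    rw [Nat.mul_div_assoc _ (Nat.dvd_of_mem_divisors hd)]
    push_cast; ring
  push_cast at h1 ⊢
  rw [h1]; ring

/-- The general term. -/
noncomputable def f (q : ℂ) (p : ℕ × ℕ) : ℂ :=
  (-1 : ℂ) ^ p.2 * (2 * (p.1 : ℂ) + 1) * q ^ ex p

lemma summable_f (q : ℂ) (hq : ‖q‖ < 1) : Summable (f q) := by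
  have h0 := norm_nonneg q
  have hg : Summable (fun b : ℕ => ‖q‖ ^ b) := summable_geometric_of_lt_one h0 hq
  have h1 : Summable (fun a : ℕ => (2 * (a : ℝ) + 1) * ‖q‖ ^ a) := by
    have h := summable_pow_mul_geometric_of_norm_lt_one 1 (r := ‖q‖) (by simpa using hq)
    refine ((h.mul_left 2).add hg).congr fun a => ?_
    simp; ring
  have h2 := h1.mul_of_nonneg hg (fun a => by positivity) (fun b => by positivity)
  refine Summable.of_norm_bounded h2 fun p => ?_
  have hn : ‖(2 * (p.1 : ℂ) + 1)‖ = 2 * (p.1 : ℝ) + 1 := by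
    have : (2 * (p.1 : ℂ) + 1) = ((2 * p.1 + 1 : ℕ) : ℂ) := by push_cast; ring
    rw [this, Complex.norm_natCast]; push_cast; ring
  rw [f, norm_mul, norm_mul, norm_pow, norm_pow, norm_neg, norm_one, one_pow, one_mul, hn,
    mul_assoc, ← pow_add]
  refine mul_le_mul_of_nonneg_left ?_ (by positivity)
  exact pow_le_pow_of_le_one h0 hq.le (by have := le_ex p; omega)

lemma tsum_fib (q : ℂ) (n : ℕ) :
    ∑' p : (ex ⁻¹' {n} : Set (ℕ × ℕ)), f q p = (ArithmeticFunction.sigma 1 n : ℂ) * q ^ n := by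
  have hs : (ex ⁻¹' {n} : Set (ℕ × ℕ)) = (fib n : Set (ℕ × ℕ)) := by
    ext p; simp [mem_fib]
  rw [hs, Finset.tsum_subtype']
  have h1 : ∑ p ∈ fib n, f q p
      = ((∑ p ∈ fib n, (-1 : ℤ) ^ p.2 * (2 * (p.1 : ℤ) + 1) : ℤ) : ℂ) * q ^ n := by
    push_cast
    rw [Finset.sum_mul]
    refine Finset.sum_congr rfl fun p hp => ?_
    rw [f, mem_fib.mp hp]
  rw [h1]
  rcases eq_or_ne n 0 with rfl | hn
  · simp [fib]
  · rw [sum_fib n hn, sum_odd n hn]; simp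

end E2Aux

/-- `Σ_{a,b≥0} (−1)^b (2a+1) q^{(b+1)(b+2a+2)/2} = (1 − E₂(q))/24`;
the exponent `(b+1)(b+2a+2)/2` is an exact natural-number division. -/
theorem sum_eq_one_sub_E2_div_24 (q : ℂ) (hq : ‖q‖ < 1) :
    (∑' p : ℕ × ℕ,
        (-1 : ℂ) ^ p.2 * (2 * (p.1 : ℂ) + 1) * q ^ ((p.2 + 1) * (p.2 + 2 * p.1 + 2) / 2))
      = (1 - E2 q) / 24 := by
  have h := (E2Aux.summable_f q hq).hasSum.tsum_fiberwise E2Aux.ex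
  simp only [E2Aux.tsum_fib] at h
  have h2 := h.summable.tsum_eq_zero_add
  rw [h.tsum_eq] at h2
  change ∑' p, E2Aux.f q p = _
  rw [h2, E2]
  simp
end

section
/- For |x| < 1 let Φ(x) = Σ_{k,l≥0} (4k+1) x^{(4k+1)(4l+1)} + Σ_{k,l≥0} (4k+3) x^{(4k+3)(4l+3)} and Ψ(x) = Σ_{k,l≥0} (k+l+1) x^{(4k+1)(4l+3)}, and let F(x) = ∏_{n=1}^∞ (1 − xⁿ). Then for every complex x with |x| < 1, Φ(x) + 4 Ψ(x) = x · F(x⁴)⁸ / F(x²)⁴. (Equivalently, the two generating series of the open Gromov–Witten potential of ℙ¹_{2,2,2,2} combine into the eta quotient η(q_d⁴)⁸/η(q_d²)⁴, whose q-expansion is Σ_{n odd} σ₁(n) q_dⁿ.) -/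
open scoped BigOperators

/-- `Φ(x) = Σ_{k,l≥0} (4k+1) x^{(4k+1)(4l+1)} + Σ_{k,l≥0} (4k+3) x^{(4k+3)(4l+3)}`,
the coefficient of `(xy)²+(xw)²+(zy)²+(zw)²` in the open Gromov–Witten
potential of `ℙ¹_{2,2,2,2}`. -/
noncomputable def Phi2222 (x : ℂ) : ℂ :=
  (∑' p : ℕ × ℕ, (4 * (p.1 : ℂ) + 1) * x ^ ((4 * p.1 + 1) * (4 * p.2 + 1)))
    + ∑' p : ℕ × ℕ, (4 * (p.1 : ℂ) + 3) * x ^ ((4 * p.1 + 3) * (4 * p.2 + 3))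

/-- `Ψ(x) = Σ_{k,l≥0} (k+l+1) x^{(4k+1)(4l+3)}`, the coefficient of `xyzw` in
the open Gromov–Witten potential of `ℙ¹_{2,2,2,2}`. -/
noncomputable def Psi2222 (x : ℂ) : ℂ :=
  ∑' p : ℕ × ℕ, ((p.1 : ℂ) + (p.2 : ℂ) + 1) * x ^ ((4 * p.1 + 1) * (4 * p.2 + 3))

noncomputable def rho (x : ℂ) (k : ℕ) : ℂ := ∏ j ∈ Finset.range k, (1 - x^(2*j+1)) / (1 - x^(2*j+2))
lemma one_sub_ne_s15 {x : ℂ} (hx : ‖x‖ < 1) (n : ℕ) (hn : n ≠ 0) : 1 - x^n ≠ 0 := by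
  intro h
  have : ‖x^n‖ = 1 := by rw [← sub_eq_zero.mp h]; simp
  rw [norm_pow] at this
  exact absurd this (pow_lt_one₀ (norm_nonneg _) hx hn).ne
lemma one_add_ne {x : ℂ} (hx : ‖x‖ < 1) (n : ℕ) (hn : n ≠ 0) : 1 + x^n ≠ 0 := by
  intro h
  have : ‖x^n‖ = 1 := by rw [eq_neg_of_add_eq_zero_right h]; simp
  rw [norm_pow] at this
  exact absurd this (pow_lt_one₀ (norm_nonneg _) hx hn).ne
noncomputable def tt (x : ℂ) (N n : ℕ) : ℂ := x^n/(1+x^(2*n+1)) * (rho x (N-1-n) * rho x (N+n))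
noncomputable def gg (x : ℂ) (N n : ℕ) : ℂ :=
  x^(2*N-n) * (1-x^(2*n)) * (rho x (N-n) * rho x (N+n))
noncomputable def lam (x : ℂ) (N : ℕ) : ℂ := (1 - x^(4*N+1)) / ((1-x^(2*N))*(1-x^(2*N+1)))
lemma wz {x : ℂ} (hx : ‖x‖ < 1) (n k : ℕ) :
    tt x (n+k+1+1) n * (1+x^(2*(n+k+1)+1))^2 - tt x (n+k+1) n * (1+x^(2*(n+k+1)))^2
     = - lam x (n+k+1) * (gg x (n+k+1) (n+1) - gg x (n+k+1) n) := by
  unfold tt gg lam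
  rw [show n+k+1+1-1-n = k+1 by omega, show n+k+1-1-n = k by omega, show n+k+1-(n+1) = k by omega,
    show n+k+1-n = k+1 by omega, show n+k+1+1+n = (2*n+k+1)+1 by omega, show n+k+1+(n+1) = (2*n+k+1)+1 by omega,
    show n+k+1+n = 2*n+k+1 by omega, show 2*(n+k+1)-(n+1) = n+2*k+1 by omega,
    show 2*(n+k+1)-n = n+2*k+2 by omega]
  have r : ∀ m, rho x (m+1) = rho x m * ((1 - x^(2*m+1)) / (1 - x^(2*m+2))) := fun m => Finset.prod_range_succ _ _
  rw [r k, r (2*n+k+1)]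
  generalize rho x k = A
  generalize rho x (2*n+k+1) = B
  have h1 := one_sub_ne_s15 hx (2*k+2) (by omega)
  have h2 := one_sub_ne_s15 hx (2*(2*n+k+1)+2) (by omega)
  have h3 := one_add_ne hx (2*n+1) (by omega)
  have h4 := one_sub_ne_s15 hx (2*(n+k+1)) (by omega)
  have h5 := one_sub_ne_s15 hx (2*(n+k+1)+1) (by omega)
  have e1 : x^(2*k+2) = (x^k)^2*x^2 := by ring
  have e2 : x^(2*(2*n+k+1)+2) = (x^n)^4*(x^k)^2*x^4 := by ring
  have e3 : x^(2*n+1) = (x^n)^2*x := by ring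
  have e4 : x^(2*(n+k+1)) = (x^n)^2*(x^k)^2*x^2 := by ring
  have e5 : x^(2*(n+k+1)+1) = (x^n)^2*(x^k)^2*x^3 := by ring
  have e6 : x^(2*k+1) = (x^k)^2*x := by ring
  have e7 : x^(2*(2*n+k+1)+1) = (x^n)^4*(x^k)^2*x^3 := by ring
  have e8 : x^(4*(n+k+1)+1) = (x^n)^4*(x^k)^4*x^5 := by ring
  have e9 : x^(n+2*k+1) = (x^n)*(x^k)^2*x := by ring
  have e10 : x^(n+2*k+2) = (x^n)*(x^k)^2*x^2 := by ring
  have e11 : x^(2*(n+1)) = (x^n)^2*x^2 := by ring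
  have e12 : x^(2*n) = (x^n)^2 := by ring
  rw [e1] at h1; rw [e2] at h2; rw [e3] at h3; rw [e4] at h4; rw [e5] at h5
  rw [e1,e2,e3,e4,e5,e6,e7,e8,e9,e10,e11,e12]
  generalize x^n = b at *
  generalize x^k = d at *
  clear e1 e2 e3 e4 e5 e6 e7 e8 e9 e10 e11 e12
  obtain ⟨p1, g1⟩ : ∃ p, p = 1 - d ^ 2 * x ^ 2 := ⟨_, rfl⟩
  obtain ⟨p2, g2⟩ : ∃ p, p = 1 - b ^ 4 * d ^ 2 * x ^ 4 := ⟨_, rfl⟩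
  obtain ⟨p3, g3⟩ : ∃ p, p = 1 + b ^ 2 * x := ⟨_, rfl⟩
  obtain ⟨p4, g4⟩ : ∃ p, p = 1 - b ^ 2 * d ^ 2 * x ^ 2 := ⟨_, rfl⟩
  obtain ⟨p5, g5⟩ : ∃ p, p = 1 - b ^ 2 * d ^ 2 * x ^ 3 := ⟨_, rfl⟩
  rw [← g1] at h1; rw [← g2] at h2; rw [← g3] at h3; rw [← g4] at h4; rw [← g5] at h5
  rw [← g1, ← g2, ← g3, ← g4, ← g5]
  field_simp
  rw [g1, g2, g3, g4, g5]
  ring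
lemma wz_top {x : ℂ} (hx : ‖x‖ < 1) (N : ℕ) (hN : N ≠ 0) :
    tt x (N+1) N * (1+x^(2*N+1))^2 = lam x N * gg x N N := by
  unfold tt gg lam
  rw [show N+1-1-N = 0 by omega, show N - N = 0 by omega, show N+1+N=2*N+1 by omega, show N+N = 2*N by omega,
    show 2*N-N=N by omega]
  have r : ∀ m, rho x (m+1) = rho x m * ((1 - x^(2*m+1)) / (1 - x^(2*m+2))) := fun m => Finset.prod_range_succ _ _
  rw [r (2*N)]
  have h1 := one_sub_ne_s15 hx (2*(2*N)+2) (by omega)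
  have h3 := one_add_ne hx (2*N+1) (by omega)
  have h4 := one_sub_ne_s15 hx (2*N) (by omega)
  have h5 := one_sub_ne_s15 hx (2*N+1) (by omega)
  have e1 : x^(2*(2*N)+2) = (x^N)^4*x^2 := by ring
  have e2 : x^(2*N+1) = (x^N)^2*x := by ring
  have e3 : x^(2*N) = (x^N)^2 := by ring
  have e4 : x^(4*N+1) = (x^N)^4*x := by ring
  have e5 : x^(2*(2*N)+1) = (x^N)^4*x := by ring
  rw [e1] at h1; rw [e2] at h3 h5; rw [e3] at h4
  rw [e1,e2,e4,e5,e3]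
  generalize x^N = b at *
  generalize rho x (2*N) = B
  clear e1 e2 e3 e4 e5
  field_simp
  ring

lemma fin_id {x : ℂ} (hx : ‖x‖ < 1) (N : ℕ) :
    (∑ n ∈ Finset.range (N+1), tt x (N+1) n) * (∏ j ∈ Finset.range (N+1), (1+x^(2*j+1)))^2
      = (∏ j ∈ Finset.range N, (1+x^(2*j+2)))^2 := by
  induction N with
  | zero =>
    have h1 := one_add_ne hx 1 (by omega)
    have h2 := one_sub_ne_s15 hx 2 (by omega)
    simp only [pow_one] at h1
    have : (1 - x^2) = (1-x)*(1+x) := by ring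
    have h3 : (1 - x) ≠ 0 := by
      intro h; rw [this, h] at h2; simp at h2
    simp [tt, rho]
    rw [this]
    field_simp
  | succ N ih =>
    have key : (∑ n ∈ Finset.range (N+1+1), tt x (N+1+1) n) * (1+x^(2*(N+1)+1))^2
       = (∑ n ∈ Finset.range (N+1), tt x (N+1) n) * (1+x^(2*(N+1)))^2 := by
      rw [Finset.sum_range_succ, add_mul, wz_top hx (N+1) (by omega), Finset.sum_mul, Finset.sum_mul]
      have : ∀ n ∈ Finset.range (N+1), tt x (N+1+1) n * (1+x^(2*(N+1)+1))^2 =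
         tt x (N+1) n * (1+x^(2*(N+1)))^2 + (- lam x (N+1) * (gg x (N+1) (n+1) - gg x (N+1) n)) := by
        intro n hn
        obtain ⟨k, rfl⟩ := Nat.exists_eq_add_of_le (Nat.lt_succ_iff.mp (Finset.mem_range.mp hn))
        rw [← wz hx n k]; ring
      rw [Finset.sum_congr rfl this, Finset.sum_add_distrib, ← Finset.mul_sum, Finset.sum_range_sub]
      have : gg x (N+1) 0 = 0 := by simp [gg]
      rw [this]; ring
    rw [Finset.prod_range_succ _ (N+1), mul_pow, Finset.prod_range_succ (fun j => 1 + x^(2*j+2)) N, mul_pow, ← ih]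
    rw [show 2*(N+1) = 2*N+2 by ring] at key
    rw [show 2*(N+1) = 2*N+2 by ring]
    linear_combination (∏ j ∈ Finset.range (N+1), (1+x^(2*j+1)))^2 * key
noncomputable def uu (x : ℂ) (n : ℕ) : ℂ := x^n/(1+x^(2*n+1))

lemma uu_bound {x : ℂ} (hx : ‖x‖ < 1) (n : ℕ) : ‖uu x n‖ ≤ ‖x‖^n * (1-‖x‖)⁻¹ := by
  have h : 1 - ‖x‖ ≤ ‖1 + x^(2*n+1)‖ := by
    have h1 : ‖(1:ℂ)‖ - ‖x^(2*n+1)‖ ≤ ‖1 + x^(2*n+1)‖ := norm_sub_le_norm_add _ _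
    rw [norm_one, norm_pow] at h1
    have h2 : ‖x‖^(2*n+1) ≤ ‖x‖ := pow_le_of_le_one (norm_nonneg _) hx.le (by omega)
    linarith
  unfold uu
  rw [norm_div, norm_pow, div_eq_mul_inv]
  have : 0 < 1 - ‖x‖ := by linarith
  gcongr

lemma uu_summable {x : ℂ} (hx : ‖x‖ < 1) : Summable (fun n => ‖uu x n‖) :=
  Summable.of_nonneg_of_le (fun _ => norm_nonneg _) (uu_bound hx)
    ((summable_geometric_of_lt_one (norm_nonneg _) hx).mul_right _)

lemma pow_summable {x : ℂ} (hx : ‖x‖ < 1) (f : ℕ → ℕ) (hf : ∀ n, n ≤ f n) :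
    Summable (fun n => ‖x^(f n)‖) :=
  Summable.of_nonneg_of_le (fun _ => norm_nonneg _)
    (fun n => by rw [norm_pow]; exact pow_le_pow_of_le_one (norm_nonneg _) hx.le (hf n))
    (summable_geometric_of_lt_one (norm_nonneg _) hx)

open Filter Topology in
lemma prod_sub_lim {x : ℂ} (hx : ‖x‖ < 1) (f : ℕ → ℕ) (hf : ∀ n, n ≤ f n) :
    Tendsto (fun N => ∏ j ∈ Finset.range N, (1 - x^(f j))) atTop (𝓝 (∏' j, (1 - x^(f j)))) := by
  have : Multipliable (fun j => 1 + -x^(f j)) :=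
    multipliable_one_add_of_summable (by simpa using pow_summable hx f hf)
  simpa [sub_eq_add_neg] using this.tendsto_prod_tprod_nat

open Filter Topology in
lemma prod_add_lim {x : ℂ} (hx : ‖x‖ < 1) (f : ℕ → ℕ) (hf : ∀ n, n ≤ f n) :
    Tendsto (fun N => ∏ j ∈ Finset.range N, (1 + x^(f j))) atTop (𝓝 (∏' j, (1 + x^(f j)))) := by
  have : Multipliable (fun j => 1 + x^(f j)) :=
    multipliable_one_add_of_summable (by simpa using pow_summable hx f hf)
  exact this.tendsto_prod_tprod_nat

lemma prod_even_odd (x : ℂ) (N : ℕ) : ∏ j ∈ Finset.range (2*N), (1 - x^(2*j+2)) =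
    (∏ j ∈ Finset.range N, (1 - x^(2*j+1))) * (∏ j ∈ Finset.range N, (1 + x^(2*j+1))) *
      ∏ j ∈ Finset.range N, (1 - x^(4*j+4)) := by
  induction N with
  | zero => simp
  | succ N ih =>
    rw [show 2*(N+1) = 2*N+1+1 by ring, Finset.prod_range_succ, Finset.prod_range_succ, ih,
      Finset.prod_range_succ, Finset.prod_range_succ, Finset.prod_range_succ]
    ring

open Filter Topology in
lemma T_eq {x : ℂ} (hx : ‖x‖ < 1) :
    (∑' n, uu x n) = eulerF (x^4)^4 / eulerF (x^2)^2 ∧ eulerF (x^2) ≠ 0 := by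
  have F2 : eulerF (x^2) = ∏' j, (1 - x^(2*j+2)) := by
    unfold eulerF; congr 1; ext j; rw [← pow_mul]; ring
  have F4 : eulerF (x^4) = ∏' j, (1 - x^(4*j+4)) := by
    unfold eulerF; congr 1; ext j; rw [← pow_mul]; ring
  have hne : eulerF (x^2) ≠ 0 := by
    rw [F2]
    have := tprod_one_add_ne_zero_of_summable (f := fun j => -x^(2*j+2))
      (fun j => by simpa [sub_eq_add_neg] using one_sub_ne_s15 hx (2*j+2) (by omega))
      (by simpa using pow_summable hx (fun j => 2*j+2) (fun n => by omega))
    simpa [sub_eq_add_neg] using this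
  refine ⟨?_, hne⟩
  have le := prod_sub_lim hx (fun j => 2*j+2) (fun n => by omega)
  have lf := prod_sub_lim hx (fun j => 4*j+4) (fun n => by omega)
  have lo := prod_sub_lim hx (fun j => 2*j+1) (fun n => by omega)
  have lp := prod_add_lim hx (fun j => 2*j+1) (fun n => by omega)
  have lr := prod_add_lim hx (fun j => 2*j+2) (fun n => by omega)
  rw [← F2] at le
  rw [← F4] at lf
  generalize eulerF (x^2) = e at *
  generalize eulerF (x^4) = f at *
  generalize (∏' j, (1 - x^(2*j+1))) = o at *
  generalize (∏' j, (1 + x^(2*j+1))) = p at *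
  generalize (∏' j, (1 + x^(2*j+2))) = r at *
  have h1 : e = o * p * f := by
    have a1 := le.comp (tendsto_id.const_mul_atTop' (show 0 < 2 by norm_num))
    refine tendsto_nhds_unique a1 (((lo.mul lp).mul lf).congr fun N => ?_)
    simpa using (prod_even_odd x N).symm
  have h2 : f = e * r := by
    refine tendsto_nhds_unique lf ((le.mul lr).congr fun N => ?_)
    rw [← Finset.prod_mul_distrib]
    refine Finset.prod_congr rfl fun j _ => ?_
    ring
  have hrho : Tendsto (rho x) atTop (𝓝 (o/e)) := by
    refine (lo.div le hne).congr fun N => ?_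
    simp [rho, Finset.prod_div_distrib]
  obtain ⟨C, hC⟩ : ∃ C, ∀ k, ‖rho x k‖ ≤ C := by
    obtain ⟨C, hC⟩ := (Metric.isBounded_range_of_tendsto _ hrho).exists_norm_le
    exact ⟨C, fun k => hC _ ⟨k, rfl⟩⟩
  have hC0 : 0 ≤ C := (norm_nonneg _).trans (hC 0)
  have lim1 : Tendsto (fun N => ∑' n, if n < N + 1 then tt x (N+1) n else 0) atTop
      (𝓝 (∑' n, uu x n * (o/e * (o/e)))) := by
    refine tendsto_tsum_of_dominated_convergence (bound := fun n => ‖uu x n‖ * (C*C))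
      ((uu_summable hx).mul_right _) (fun n => ?_) (Eventually.of_forall fun N n => ?_)
    · have t1 : Tendsto (fun N => N + 1 - 1 - n) atTop atTop :=
        tendsto_atTop_atTop.2 fun b => ⟨b + n, fun a ha => by omega⟩
      have t2 : Tendsto (fun N => N + 1 + n) atTop atTop :=
        tendsto_atTop_atTop.2 fun b => ⟨b, fun a ha => by omega⟩
      have := ((hrho.comp t1).mul (hrho.comp t2)).const_mul (uu x n)
      refine this.congr' ?_
      filter_upwards [eventually_ge_atTop n] with N hN
      rw [if_pos (by omega)]; rfl
    · split_ifs
      · change ‖uu x n * (_ * _)‖ ≤ _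
        rw [norm_mul, norm_mul]
        gcongr <;> apply hC
      · simp; positivity
  have lim2 : Tendsto (fun N => (∑' n, if n < N + 1 then tt x (N+1) n else 0) *
     (∏ j ∈ Finset.range (N+1), (1+x^(2*j+1)))^2) atTop (𝓝 (r^2)) := by
    refine (lr.pow 2).congr fun N => ?_
    rw [← fin_id hx N]
    congr 1
    rw [tsum_eq_sum (s := Finset.range (N+1)) (fun n hn => if_neg (by simpa using hn))]
    exact Finset.sum_congr rfl fun n hn => (if_pos (by simpa using hn)).symm
  have lim3 := lim1.mul (((tendsto_add_atTop_iff_nat 1).2 lp).pow 2)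
  have key := tendsto_nhds_unique lim3 lim2
  rw [tsum_mul_right] at key
  generalize (∑' n, uu x n) = T at *
  have hf : f ≠ 0 := by rintro rfl; simp at h1; exact hne h1
  rw [eq_div_iff (pow_ne_zero _ hne)]
  field_simp at key
  have h3 : T * (o*p)^2 = f^2 := by rw [h2]; linear_combination key
  calc T * e^2 = (T * (o*p)^2) * f^2 := by rw [h1]; ring
    _ = f^4 := by rw [h3]; ring
lemma tsum_diag {f : ℕ × ℕ → ℂ} (hf : Summable f) :
    ∑' p, f p = ∑' m, f (m, m) + ∑' p : ℕ × ℕ, f (p.2, p.2 + p.1 + 1)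
      + ∑' p : ℕ × ℕ, f (p.2 + p.1 + 1, p.2) := by
  have i1 : Function.Injective (fun m : ℕ => (m, m)) := fun a b h => by simpa using h
  have i2 : Function.Injective (fun p : ℕ × ℕ => (p.2, p.2 + p.1 + 1)) := fun a b h => by
    simp only [Prod.mk.injEq] at h; ext <;> omega
  have i3 : Function.Injective (fun p : ℕ × ℕ => (p.2 + p.1 + 1, p.2)) := fun a b h => by
    simp only [Prod.mk.injEq] at h; ext <;> omega
  have e1 : ∑' m, f (m, m) = ∑' p, {p : ℕ × ℕ | p.1 = p.2}.indicator f p := by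
    rw [← i1.tsum_eq]
    · simp
    · rintro ⟨a, b⟩ h
      have := Set.mem_of_indicator_ne_zero h
      exact ⟨a, by simp_all⟩
  have e2 : ∑' p : ℕ × ℕ, f (p.2, p.2 + p.1 + 1) = ∑' p, {p : ℕ × ℕ | p.1 < p.2}.indicator f p := by
    rw [← i2.tsum_eq (f := {p : ℕ × ℕ | p.1 < p.2}.indicator f)]
    · refine tsum_congr fun p => ?_
      rw [Set.indicator_of_mem]; simp only [Set.mem_ofPred_eq]; omega
    · rintro ⟨a, b⟩ h
      have := Set.mem_of_indicator_ne_zero h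
      simp only [Set.mem_ofPred_eq] at this
      exact ⟨(b - a - 1, a), by ext <;> simp; omega⟩
  have e3 : ∑' p : ℕ × ℕ, f (p.2 + p.1 + 1, p.2) = ∑' p, {p : ℕ × ℕ | p.2 < p.1}.indicator f p := by
    rw [← i3.tsum_eq (f := {p : ℕ × ℕ | p.2 < p.1}.indicator f)]
    · refine tsum_congr fun p => ?_
      rw [Set.indicator_of_mem]; simp only [Set.mem_ofPred_eq]; omega
    · rintro ⟨a, b⟩ h
      have := Set.mem_of_indicator_ne_zero h
      simp only [Set.mem_ofPred_eq] at this
      exact ⟨(a - b - 1, b), by ext <;> simp; omega⟩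
  rw [e1, e2, e3, ← (hf.indicator _).tsum_add (hf.indicator _),
    ← ((hf.indicator _).add (hf.indicator _)).tsum_add (hf.indicator _)]
  refine tsum_congr fun p => ?_
  simp only [Set.indicator_apply, Set.mem_ofPred_eq]
  rcases lt_trichotomy p.1 p.2 with h | h | h
  · simp [h, h.ne, h.not_gt]
  · simp [h]
  · simp [h, h.ne', h.not_gt]

noncomputable def vv (x : ℂ) (n : ℕ) : ℂ := 1/(1+x^(2*n+1))

open Filter Topology in
lemma vv_tendsto {x : ℂ} (hx : ‖x‖ < 1) : Tendsto (vv x) atTop (𝓝 1) := by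
  have h1 : Tendsto (fun n : ℕ => x^(2*n+1)) atTop (𝓝 0) :=
    (tendsto_pow_atTop_nhds_zero_of_norm_lt_one hx).comp
      (tendsto_atTop_atTop.2 fun b => ⟨b, fun a ha => by omega⟩)
  have h2 : Tendsto (fun n : ℕ => 1 / (1 + x^(2*n+1))) atTop (𝓝 (1 / (1 + 0))) :=
    tendsto_const_nhds.div (tendsto_const_nhds.add h1) (by simp)
  simp only [add_zero, div_one] at h2
  exact h2

lemma uu_cauchy {x : ℂ} (hx : ‖x‖ < 1) (m n : ℕ) :
    uu x m * uu x n = x^(m+n)/(1-x^(2*(m+n)+2)) * (vv x m + vv x n - 1) := by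
  have h1 := one_add_ne hx (2*m+1) (by omega)
  have h2 := one_add_ne hx (2*n+1) (by omega)
  have h3 := one_sub_ne_s15 hx (2*(m+n)+2) (by omega)
  unfold uu vv
  have e : x^(2*(m+n)+2) = x^(2*m+1) * x^(2*n+1) := by ring
  rw [e] at h3 ⊢
  rw [pow_add x m n]
  clear e
  generalize x^(2*m+1) = a at *
  generalize x^(2*n+1) = b at *
  field_simp
  ring

lemma uu_shift {x : ℂ} (hx : ‖x‖ < 1) (m d : ℕ) :
    uu x m * uu x (m+d+1) = x^d/(1-x^(2*d+2)) * (vv x (m+(d+1)) - vv x m) := by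
  have h1 := one_add_ne hx (2*m+1) (by omega)
  have h2 := one_add_ne hx (2*(m+d+1)+1) (by omega)
  have h3 := one_sub_ne_s15 hx (2*d+2) (by omega)
  unfold uu vv
  rw [show 2*(m+(d+1))+1 = 2*(m+d+1)+1 by ring]
  have e : x^(2*(m+d+1)+1) = x^(2*m+1) * x^(2*d+2) := by ring
  have e2 : x^(m+d+1) * x^m = x^d * x^(2*m+1) := by ring
  rw [e] at h2 ⊢
  clear e
  generalize x^(2*m+1) = a at *
  generalize x^(2*d+2) = b at *
  rw [div_mul_div_comm, mul_comm (x^m), e2]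
  field_simp
  ring

lemma anti_sum {x : ℂ} (hx : ‖x‖ < 1) (d : ℕ) :
    ∑ p ∈ Finset.HasAntidiagonal.antidiagonal d, uu x p.1 * uu x p.2 =
      x^d/(1-x^(2*d+2)) * (2 * ∑ m ∈ Finset.range (d+1), vv x m - (d+1)) := by
  have : ∀ p ∈ Finset.HasAntidiagonal.antidiagonal d, uu x p.1 * uu x p.2 =
      x^d/(1-x^(2*d+2)) * (vv x p.1 + vv x p.2 - 1) := by
    intro p hp
    rw [← Finset.HasAntidiagonal.mem_antidiagonal.mp hp, uu_cauchy hx]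
  rw [Finset.sum_congr rfl this, ← Finset.mul_sum, Finset.sum_sub_distrib, Finset.sum_add_distrib]
  have a1 : ∑ p ∈ Finset.HasAntidiagonal.antidiagonal d, vv x p.1 = ∑ m ∈ Finset.range (d+1), vv x m :=
    Finset.Nat.sum_antidiagonal_eq_sum_range_succ (fun i _ => vv x i) d
  have a2 : ∑ p ∈ Finset.HasAntidiagonal.antidiagonal d, vv x p.2 = ∑ m ∈ Finset.range (d+1), vv x m := by
    rw [← Finset.Nat.sum_antidiagonal_swap]; exact a1
  rw [a1, a2]
  simp
  ring_nf
  simp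

open Filter Topology in
lemma shift_sum {x : ℂ} (hx : ‖x‖ < 1) (d : ℕ)
    (hs : Summable fun m => uu x m * uu x (m+d+1)) :
    ∑' m, uu x m * uu x (m+d+1) =
      x^d/(1-x^(2*d+2)) * ((d+1) - ∑ m ∈ Finset.range (d+1), vv x m) := by
  refine tendsto_nhds_unique hs.hasSum.tendsto_sum_nat ?_
  have h1 : Tendsto (fun M => ∑ i ∈ Finset.range (d+1), vv x (M+i)) atTop
      (𝓝 (∑ i ∈ Finset.range (d+1), (1:ℂ))) :=
    tendsto_finsetSum _ fun i _ => (vv_tendsto hx).comp (tendsto_add_atTop_nat i)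
  simp only [Finset.sum_const, Finset.card_range, nsmul_eq_mul, mul_one, Nat.cast_add,
    Nat.cast_one] at h1
  refine ((h1.sub_const _).const_mul _).congr fun M => ?_
  rw [Finset.sum_congr rfl (fun m _ => uu_shift hx m d), ← Finset.mul_sum, Finset.sum_sub_distrib]
  congr 1
  have h2 := Finset.sum_range_add (vv x) M (d+1)
  have h3 := Finset.sum_range_add (vv x) (d+1) M
  rw [add_comm (d+1) M, h2] at h3
  simp only [add_comm (d+1)] at h3
  linear_combination h3

lemma two_T_sq {x : ℂ} (hx : ‖x‖ < 1) :
    2 * (∑' n, uu x n)^2 = ∑' m, uu x m ^2 + ∑' d : ℕ, (d+1) * (x^d/(1-x^(2*d+2))) := by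
  have hu := uu_summable hx
  have hs : Summable (fun p : ℕ × ℕ => uu x p.1 * uu x p.2) := summable_mul_of_summable_norm hu hu
  have i2 : Function.Injective (fun p : ℕ × ℕ => (p.2, p.2 + p.1 + 1)) := fun a b h => by
    simp only [Prod.mk.injEq] at h; ext <;> omega
  have hs2 : Summable (fun p : ℕ × ℕ => uu x p.2 * uu x (p.2 + p.1 + 1)) := by
    have := hs.comp_injective i2
    simpa only [Function.comp_def] using this
  have c1 := tsum_mul_tsum_eq_tsum_sum_antidiagonal_of_summable_norm hu hu
  have c1s := (summable_norm_sum_mul_antidiagonal_of_summable_norm hu hu).of_norm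
  have c2 := tsum_mul_tsum_of_summable_norm hu hu
  have c2' := tsum_diag hs
  simp only at c2'
  rw [c2'] at c2
  clear c2'
  have c3 : ∑' p : ℕ × ℕ, uu x (p.2 + p.1 + 1) * uu x p.2 =
    ∑' p : ℕ × ℕ, uu x p.2 * uu x (p.2 + p.1 + 1) := tsum_congr fun p => mul_comm _ _
  rw [c3] at c2
  have c4 : ∑' p : ℕ × ℕ, uu x p.2 * uu x (p.2 + p.1 + 1) =
      ∑' d : ℕ, x^d/(1-x^(2*d+2)) * ((d+1) - ∑ m ∈ Finset.range (d+1), vv x m) := by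
    rw [hs2.tsum_prod]
    exact tsum_congr fun d => shift_sum hx d (hs2.prod_factor d)
  have c4s : Summable fun d : ℕ => x^d/(1-x^(2*d+2)) * ((d+1) - ∑ m ∈ Finset.range (d+1), vv x m) :=
    hs2.prod.congr fun d => shift_sum hx d (hs2.prod_factor d)
  rw [tsum_congr (anti_sum hx)] at c1
  replace c1s := c1s.congr (anti_sum hx)
  have c5 := c1s.tsum_add (c4s.mul_left 2)
  rw [tsum_mul_left, ← c4, ← c1] at c5
  have c6 : ∑' d : ℕ, (d+1) * (x^d/(1-x^(2*d+2))) = ∑' d : ℕ,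
     (x^d/(1-x^(2*d+2)) * (2 * ∑ m ∈ Finset.range (d+1), vv x m - (d+1)) +
     2 * (x^d/(1-x^(2*d+2)) * ((d+1) - ∑ m ∈ Finset.range (d+1), vv x m))) :=
    tsum_congr fun d => by ring
  rw [c6, c5]
  simp only [pow_two]
  linear_combination c2
lemma tsum_split2 {f : ℕ × ℕ → ℂ} (hf : Summable f) :
    ∑' p, f p = ∑' p : ℕ × ℕ, f (p.1, 2*p.2) + ∑' p : ℕ × ℕ, f (p.1, 2*p.2+1) := by
  have i1 : Function.Injective (fun p : ℕ × ℕ => (p.1, 2*p.2)) := fun a b h => by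
    simp only [Prod.mk.injEq] at h; ext <;> omega
  have i2 : Function.Injective (fun p : ℕ × ℕ => (p.1, 2*p.2+1)) := fun a b h => by
    simp only [Prod.mk.injEq] at h; ext <;> omega
  have s1 : Summable (fun p : ℕ × ℕ => f (p.1, 2*p.2)) := by
    simpa only [Function.comp_def] using hf.comp_injective i1
  have s2 : Summable (fun p : ℕ × ℕ => f (p.1, 2*p.2+1)) := by
    simpa only [Function.comp_def] using hf.comp_injective i2
  rw [hf.tsum_prod, s1.tsum_prod, s2.tsum_prod, ← s1.prod.tsum_add s2.prod]
  exact tsum_congr fun a => (tsum_even_add_odd (f := fun b => f (a, b)) (s1.prod_factor a) (s2.prod_factor a)).symm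

lemma tsum_split1 {f : ℕ × ℕ → ℂ} (hf : Summable f) :
    ∑' p, f p = ∑' p : ℕ × ℕ, f (2*p.1, p.2) + ∑' p : ℕ × ℕ, f (2*p.1+1, p.2) := by
  have h1 : Summable (fun p : ℕ × ℕ => f p.swap) := (Equiv.prodComm ℕ ℕ).summable_iff.mpr hf
  have h2 := tsum_split2 h1
  rw [← (Equiv.prodComm ℕ ℕ).tsum_eq f, ← (Equiv.prodComm ℕ ℕ).tsum_eq (fun p : ℕ × ℕ => f (2*p.1, p.2)),
    ← (Equiv.prodComm ℕ ℕ).tsum_eq (fun p : ℕ × ℕ => f (2*p.1+1, p.2))]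
  exact h2

noncomputable def hh (x : ℂ) (p : ℕ × ℕ) : ℂ := ((p.1 : ℂ) + 1) * x^((p.1+1)*(2*p.2+1))

lemma hh_summable {x : ℂ} (hx : ‖x‖ < 1) : Summable (fun p => ‖hh x p‖) := by
  have s1 : Summable (fun n : ℕ => ((n:ℝ)+1) * ‖x‖^n) := by
    have a := summable_pow_mul_geometric_of_norm_lt_one (R := ℝ) 1 (r := ‖x‖) (by simpa using hx)
    have b := summable_geometric_of_lt_one (norm_nonneg x) hx
    exact (a.add b).congr fun n => by ring
  have s2 := s1.mul_of_nonneg (summable_geometric_of_lt_one (norm_nonneg x) hx)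
    (fun n => by positivity) (fun n => by positivity)
  refine Summable.of_nonneg_of_le (fun _ => norm_nonneg _) (fun p => ?_) s2
  unfold hh
  have : ‖((p.1 : ℂ) + 1)‖ = (p.1:ℝ)+1 := by
    rw [← Nat.cast_add_one, Complex.norm_natCast]; simp
  rw [norm_mul, this, norm_pow, mul_assoc, ← pow_add]
  refine mul_le_mul_of_nonneg_left ?_ (by positivity)
  exact pow_le_pow_of_le_one (norm_nonneg _) hx.le (by nlinarith)

lemma lam1 {x : ℂ} (hx : ‖x‖ < 1) (m : ℕ) :
    x * uu x m ^2 = ∑' d : ℕ, (-1)^d * hh x (d, m) := by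
  have hy : ‖-x^(2*m+1)‖ < 1 := by
    rw [norm_neg, norm_pow]; exact pow_lt_one₀ (norm_nonneg _) hx (by omega)
  have h := hasSum_coe_mul_geometric_of_norm_lt_one hy
  have h2 := h.tsum_eq
  rw [h.summable.tsum_eq_zero_add] at h2
  have h3 := one_add_ne hx (2*m+1) (by omega)
  have e : x * uu x m ^2 = - (-x ^ (2 * m + 1) / (1 - -x ^ (2 * m + 1)) ^ 2) := by
    unfold uu
    rw [sub_neg_eq_add, div_pow, neg_div, neg_neg]
    ring
  rw [e, ← h2]
  simp only [Nat.cast_zero, zero_mul, zero_add]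
  rw [← tsum_neg]
  refine tsum_congr fun d => ?_
  unfold hh
  rw [neg_pow, ← pow_mul, mul_comm (d+1) (2*m+1), pow_succ]
  push_cast
  ring

lemma lam2 {x : ℂ} (hx : ‖x‖ < 1) (d : ℕ) :
    x * ((d+1) * (x^d/(1-x^(2*d+2)))) = ∑' m : ℕ, hh x (d, m) := by
  have hy : ‖x^(2*d+2)‖ < 1 := by
    rw [norm_pow]; exact pow_lt_one₀ (norm_nonneg _) hx (by omega)
  have h := tsum_geometric_of_norm_lt_one hy
  rw [div_eq_mul_inv, ← h]
  have : x * ((d+1) * (x^d * ∑' n : ℕ, (x^(2*d+2))^n)) = ((d+1) * x^(d+1)) * ∑' n : ℕ, (x^(2*d+2))^n := by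
    ring
  rw [this, ← tsum_mul_left]
  refine tsum_congr fun m => ?_
  unfold hh
  rw [← pow_mul, mul_assoc, ← pow_add]
  congr 2
  ring

lemma xT_sq {x : ℂ} (hx : ‖x‖ < 1) :
    x * (∑' n, uu x n)^2 = ∑' p : ℕ × ℕ, hh x (2*p.1, p.2) := by
  have hs := hh_summable hx
  have hs2 : Summable (fun p : ℕ × ℕ => (-1)^p.1 * hh x p) :=
    Summable.of_norm (hs.congr fun p => by simp)
  have h := two_T_sq hx
  have a1 : x * ∑' m, uu x m ^ 2 = ∑' p : ℕ × ℕ, (-1)^p.1 * hh x p := by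
    rw [← tsum_mul_left, tsum_congr (lam1 hx), hs2.tsum_prod, Summable.tsum_comm]
    exact hs2
  have a2 : x * ∑' d : ℕ, (d+1) * (x^d/(1-x^(2*d+2))) = ∑' p : ℕ × ℕ, hh x p := by
    rw [← tsum_mul_left, tsum_congr (lam2 hx), hs.of_norm.tsum_prod]
  rw [tsum_split1 hs2] at a1
  rw [tsum_split1 hs.of_norm] at a2
  have a3 : ∑' p : ℕ × ℕ, (-1)^(2*p.1) * hh x (2*p.1, p.2) = ∑' p : ℕ × ℕ, hh x (2*p.1, p.2) :=
    tsum_congr fun p => by simp [pow_mul]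
  have a4 : ∑' p : ℕ × ℕ, (-1)^(2*p.1+1) * hh x (2*p.1+1, p.2) = - ∑' p : ℕ × ℕ, hh x (2*p.1+1, p.2) := by
    rw [← tsum_neg]
    exact tsum_congr fun p => by simp [pow_succ, pow_mul]
  rw [a3, a4] at a1
  linear_combination (x * h + a1 + a2) / 2

lemma lhs_eq {x : ℂ} (hx : ‖x‖ < 1) :
    Phi2222 x + 4 * Psi2222 x = ∑' p : ℕ × ℕ, hh x (2*p.1, p.2) := by
  have hs := (hh_summable hx).of_norm
  have inj : ∀ a b c d : ℕ, a ≠ 0 → c ≠ 0 →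
      Summable (fun p : ℕ × ℕ => hh x (a*p.1+b, c*p.2+d)) := by
    intro a b c d ha hc
    have i : Function.Injective (fun p : ℕ × ℕ => (a*p.1+b, c*p.2+d)) := fun p q h => by
      simp only [Prod.mk.injEq, Nat.add_right_cancel_iff] at h
      ext
      · exact Nat.eq_of_mul_eq_mul_left (Nat.pos_of_ne_zero ha) h.1
      · exact Nat.eq_of_mul_eq_mul_left (Nat.pos_of_ne_zero hc) h.2
    simpa only [Function.comp_def] using hs.comp_injective i
  have k0 : Summable (fun p : ℕ × ℕ => hh x (2*p.1, p.2)) := by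
    simpa using inj 2 0 1 0 (by norm_num) (by norm_num)
  have k1 : Summable (fun p : ℕ × ℕ => hh x (2*(2*p.1), p.2)) := by
    simpa [← mul_assoc] using inj 4 0 1 0 (by norm_num) (by norm_num)
  have k2 : Summable (fun p : ℕ × ℕ => hh x (2*(2*p.1+1), p.2)) := by
    simpa [mul_add, ← mul_assoc] using inj 4 2 1 0 (by norm_num) (by norm_num)
  have k3 : Summable (fun p : ℕ × ℕ => hh x (2*(2*p.1), 2*p.2+1)) := by
    simpa [← mul_assoc] using inj 4 0 2 1 (by norm_num) (by norm_num)
  have k4 : Summable (fun p : ℕ × ℕ => hh x (2*(2*p.1+1), 2*p.2)) := by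
    simpa [mul_add, ← mul_assoc] using inj 4 2 2 0 (by norm_num) (by norm_num)
  have k5 : Summable (fun p : ℕ × ℕ => hh x (2*(2*p.2+1), 2*p.1)) :=
    (Equiv.prodComm ℕ ℕ).summable_iff.mpr k4
  rw [tsum_split1 k0, tsum_split2 k1, tsum_split2 k2]
  have e4 : ∑' p : ℕ × ℕ, hh x (2*(2*p.1+1), 2*p.2) = ∑' p : ℕ × ℕ, hh x (2*(2*p.2+1), 2*p.1) :=
    ((Equiv.prodComm ℕ ℕ).tsum_eq (fun p : ℕ × ℕ => hh x (2*(2*p.1+1), 2*p.2))).symm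
  have e1 : 4 * Psi2222 x = ∑' p : ℕ × ℕ, hh x (2*(2*p.1), 2*p.2+1)
      + ∑' p : ℕ × ℕ, hh x (2*(2*p.1+1), 2*p.2) := by
    rw [e4, ← k3.tsum_add k5]
    unfold Psi2222
    rw [← tsum_mul_left]
    refine tsum_congr fun p => ?_
    unfold hh
    simp only
    rw [show (2*(2*p.1)+1)*(2*(2*p.2+1)+1) = (4*p.1+1)*(4*p.2+3) by ring,
      show (2*(2*p.2+1)+1)*(2*(2*p.1)+1) = (4*p.1+1)*(4*p.2+3) by ring]
    push_cast
    ring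
  have e2 : ∑' p : ℕ × ℕ, (4 * (p.1 : ℂ) + 1) * x ^ ((4 * p.1 + 1) * (4 * p.2 + 1))
      = ∑' p : ℕ × ℕ, hh x (2*(2*p.1), 2*p.2) := by
    refine tsum_congr fun p => ?_
    unfold hh
    simp only
    rw [show (2*(2*p.1)+1)*(2*(2*p.2)+1) = (4*p.1+1)*(4*p.2+1) by ring]
    push_cast
    ring
  have e3 : ∑' p : ℕ × ℕ, (4 * (p.1 : ℂ) + 3) * x ^ ((4 * p.1 + 3) * (4 * p.2 + 3))
      = ∑' p : ℕ × ℕ, hh x (2*(2*p.1+1), 2*p.2+1) := by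
    refine tsum_congr fun p => ?_
    unfold hh
    simp only
    rw [show (2*(2*p.1+1)+1)*(2*(2*p.2+1)+1) = (4*p.1+3)*(4*p.2+3) by ring]
    push_cast
    ring
  rw [e1]
  unfold Phi2222
  rw [e2, e3]
  ring

/-- `Φ(x) + 4Ψ(x) = x F(x⁴)⁸/F(x²)⁴`, i.e. `ψ + 4φ = η(q_d⁴)⁸/η(q_d²)⁴`. -/
theorem phi_add_four_psi (x : ℂ) (hx : ‖x‖ < 1) :
    Phi2222 x + 4 * Psi2222 x = x * eulerF (x ^ 4) ^ 8 / eulerF (x ^ 2) ^ 4 := by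

  obtain ⟨hT, hne⟩ := T_eq hx
  rw [lhs_eq hx, ← xT_sq hx, hT, div_pow]
  ring
end
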